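/- Let λ, α, β : [0,1) → ℝ be smooth functions with α(s) > 0 and λ(s) ≥ 0 for all s, satisfying: λ(0) = 0; λ(s) → +∞ as s → 1⁻; lim sup_{s→1} α(s) < +∞; and β(s) ∈ (0, 2] for all s ∈ [0,1). Then there exists s₀ ∈ (0,1) such that the Lorenz-like system with parameters λ(s₀), α(s₀), β(s₀) has a homoclinic trajectory to the origin. -/

import Mathlib

/-!
In the coordinates `X = x²`, `k = ϑ / x`, `w = u + b x² / 2` the system (for `x > 0`) reads
`X' = 2 k X`, `k' = 1 - l k - k² - (1 - b/2) X - w`, `w' = a (b X / 2 - w)`, and a homoclinic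
trajectory is an entire orbit with `k` bounded and `X, w → 0` at both ends (`Orbit.isHomoclinic`).
Such an orbit is found by shooting, followed by a limit.

For a small `δ`, start at `X = δ` in the unstable direction `k² + l k = 1`, with `w / X` stationary,
and vary `s` over `[0, S]` where `lam S ≥ 4`. The orbit is followed as long as
`j = k² + l k - 1 + w + (1 - b/2) X / 2` is nonnegative and `k ≥ -(l + 2)`. In this region `k` is
nonincreasing (`Orbit.k_anti`), `w / X` is nondecreasing (`Orbit.z_nonneg`), a positive `j` cannot
vanish and become positive again (`Orbit.j_pos`), and `X, w` are bounded (`Orbit.bounds`), so that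
the flow of a truncated vector field (`CutFlow`) can be used.

* For `l = 0`, the nondecreasing energy `X j - w² / b` keeps `j` positive, and the orbit crosses
  `k = -(l + 1)` (`CutFlow.crossing_of_zero`).
* For `l² ≥ 13`, barrier functions keep the orbit in `k > -l/2` (`Orbit.no_crossing`).
* Crossing is an open condition. At the first parameter where it fails, the orbit stays in the region
  forever and `k` becomes negative (`CutFlow.boundary`, `CutFlow.shooting`).

The last point and the limit below both use that an orbit staying in the region cannot keep `k ≥ 0`
(`Orbit.exists_k_neg`). This is immediate for `b < 2`. For `b = 2` the orbit would have to converge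
to the equilibrium `(1, 0, 1)`, and `l² < 8` makes it turn around that point; if `b = 2` and `l² ≥ 8`,
the barriers of `Orbit.no_crossing` show that the parameter is not one selected by the shooting.

Finally let `δ → 0`. The selected orbits pass through `X = 1/2` at times tending to infinity
(`CutFlow.exists_half`). By compactness the parameters and these points converge along a subsequence,
and the limit point lies on an entire orbit in the closed region, which tends to the origin at both
ends (`CutFlow.homoclinic_of_limit`). The limiting parameter is not `0`, as the energy excludes
homoclinic orbits with `l = 0` (`Orbit.l_ne_zero`).
-/

open Filter Set

/-- The Lorenz-like system (8): ẋ = ϑ, ϑ̇ = −λϑ − x·u + x − x³, u̇ = −α·u − β·x·ϑ.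
`lam`, `a`, `b` stand for the parameters λ, α, β respectively. -/
def IsSolution (lam a b : ℝ) (x ϑ u : ℝ → ℝ) : Prop :=
  ∀ t : ℝ, HasDerivAt x (ϑ t) t ∧
    HasDerivAt ϑ (-lam * ϑ t - x t * u t + x t - (x t) ^ 3) t ∧
    HasDerivAt u (-a * u t - b * x t * ϑ t) t

/-- A homoclinic trajectory to the origin: a nonconstant solution defined on all of ℝ
tending to (0,0,0) as t → ±∞. -/
def IsHomoclinicToOrigin (lam a b : ℝ) (x ϑ u : ℝ → ℝ) : Prop :=
  IsSolution lam a b x ϑ u ∧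
  (∃ t₁ t₂ : ℝ, (x t₁, ϑ t₁, u t₁) ≠ (x t₂, ϑ t₂, u t₂)) ∧
  Tendsto (fun t => ((x t, ϑ t, u t) : ℝ × ℝ × ℝ)) atTop (nhds ((0 : ℝ), (0 : ℝ), (0 : ℝ))) ∧
  Tendsto (fun t => ((x t, ϑ t, u t) : ℝ × ℝ × ℝ)) atBot (nhds ((0 : ℝ), (0 : ℝ), (0 : ℝ)))

/-! ### Flows of bounded Lipschitz vector fields -/

/-- Local solutions on `[-(n+1), n+1]` are provided by the Picard–Lindelöf theorem; they agree by
uniqueness and are glued. -/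
theorem exists_global_solution {E : Type*} [NormedAddCommGroup E] [NormedSpace ℝ E]
    [CompleteSpace E] {F : E → E} {K L : NNReal} (hF : LipschitzWith K F)
    (hL : ∀ y, ‖F y‖ ≤ L) (y : E) :
    ∃ f : ℝ → E, f 0 = y ∧ ∀ t, HasDerivAt f (F (f t)) t := by
  have loc : ∀ n : ℕ, ∃ f : ℝ → E, f 0 = y ∧
      ∀ t ∈ Icc (-(n + 1 : ℝ)) (n + 1), HasDerivWithinAt f (F (f t)) (Icc (-(n + 1 : ℝ)) (n + 1)) t := by
    intro n
    have h0 : (0 : ℝ) ∈ Icc (-(n + 1 : ℝ)) (n + 1) := by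
      constructor <;> linarith [(Nat.cast_nonneg n : (0 : ℝ) ≤ n)]
    have hP : IsPicardLindelof (fun _ ↦ F) (⟨0, h0⟩ : Icc (-(n + 1 : ℝ)) (n + 1)) y
        (L * (n + 1)) 0 L K := by
      apply IsPicardLindelof.of_time_independent
      · exact fun x _ ↦ hL x
      · exact hF.lipschitzOnWith
      · simp
    exact hP.exists_eq_forall_mem_Icc_hasDerivWithinAt₀
  choose f hf0 hf using loc
  have hfd : ∀ n : ℕ, ∀ t ∈ Ioo (-(n + 1 : ℝ)) (n + 1), HasDerivAt (f n) (F (f n t)) t :=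
    fun n t ht ↦ (hf n t (Ioo_subset_Icc_self ht)).hasDerivAt (Icc_mem_nhds ht.1 ht.2)
  have agree : ∀ m n : ℕ, m ≤ n → ∀ t ∈ Ioo (-(m + 1 : ℝ)) (m + 1), f m t = f n t := by
    intro m n hmn t ht
    have hmn' : (m : ℝ) ≤ n := by exact_mod_cast hmn
    have hm : (0 : ℝ) ≤ m := Nat.cast_nonneg m
    refine ODE_solution_unique_of_mem_Ioo (v := fun _ ↦ F) (s := fun _ ↦ univ) (t₀ := 0) (K := K)
      (fun _ _ ↦ hF.lipschitzOnWith) (by constructor <;> linarith)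
      (fun t ht ↦ ⟨hfd m t ht, mem_univ _⟩)
      (fun t ht ↦ ⟨hfd n t ⟨by linarith [ht.1], by linarith [ht.2]⟩, mem_univ _⟩) ?_ ht
    rw [hf0, hf0]
  have key : ∀ n : ℕ, ∀ t ∈ Ioo (-(n + 1 : ℝ)) (n + 1), f ⌈|t|⌉₊ t = f n t := by
    intro n t ht
    have h1 : |t| ≤ (⌈|t|⌉₊ : ℝ) := Nat.le_ceil _
    have h2 := abs_le.1 h1
    rcases le_total ⌈|t|⌉₊ n with h | h
    · exact agree _ _ h t ⟨by linarith, by linarith⟩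
    · exact (agree _ _ h t ht).symm
  refine ⟨fun t ↦ f ⌈|t|⌉₊ t, by simpa using hf0 0, fun t ↦ ?_⟩
  have h1 := abs_le.1 (Nat.le_ceil |t|)
  have ht : t ∈ Ioo (-((⌈|t|⌉₊ : ℝ) + 1)) (⌈|t|⌉₊ + 1) := ⟨by linarith, by linarith⟩
  refine (hfd ⌈|t|⌉₊ t ht).congr_of_eventuallyEq ?_
  filter_upwards [Ioo_mem_nhds ht.1 ht.2] with r hr
  exact key _ r hr

/-- A bounded, globally Lipschitz vector field on a Banach space generates a flow which is jointly
continuous in time and initial value. -/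
theorem exists_flow {E : Type*} [NormedAddCommGroup E] [NormedSpace ℝ E]
    [CompleteSpace E] {F : E → E} {K L : NNReal} (hF : LipschitzWith K F)
    (hL : ∀ y, ‖F y‖ ≤ L) :
    ∃ φ : E → ℝ → E, (∀ y, φ y 0 = y) ∧ (∀ y t, HasDerivAt (φ y) (F (φ y t)) t) ∧
      Continuous (fun p : E × ℝ ↦ φ p.1 p.2) ∧ ∀ y s t, φ y (s + t) = φ (φ y s) t := by
  choose φ h0 hd using exists_global_solution hF hL
  have hc : ∀ y, Continuous (φ y) := fun y ↦ continuous_iff_continuousAt.2 fun t ↦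
    (hd y t).continuousAt
  have fwd : ∀ y z t, 0 ≤ t → dist (φ y t) (φ z t) ≤ dist y z * Real.exp (K * t) := by
    intro y z t ht
    have := dist_le_of_trajectories_ODE (v := fun _ ↦ F) (f := φ y) (g := φ z) (a := 0) (b := t)
      (δ := dist y z) (K := K) (fun _ ↦ hF) (hc y).continuousOn
      (fun t _ ↦ (hd y t).hasDerivWithinAt) (hc z).continuousOn
      (fun t _ ↦ (hd z t).hasDerivWithinAt) (by rw [h0, h0]) t ⟨ht, le_rfl⟩
    simpa using this
  have hdn : ∀ y t, HasDerivAt (fun t ↦ φ y (-t)) (-F (φ y (-t))) t := by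
    intro y t
    have := (hd y (-t)).scomp t (hasDerivAt_neg t)
    simpa [Function.comp_def] using this
  have bwd : ∀ y z t, 0 ≤ t → dist (φ y (-t)) (φ z (-t)) ≤ dist y z * Real.exp (K * t) := by
    intro y z t ht
    have := dist_le_of_trajectories_ODE (v := fun _ x ↦ -F x) (f := fun t ↦ φ y (-t))
      (g := fun t ↦ φ z (-t)) (a := 0) (b := t)
      (δ := dist y z) (K := K) (fun _ ↦ hF.neg) ((hc y).comp continuous_neg).continuousOn
      (fun t _ ↦ (hdn y t).hasDerivWithinAt) ((hc z).comp continuous_neg).continuousOn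
      (fun t _ ↦ (hdn z t).hasDerivWithinAt) (by simp [h0]) t ⟨ht, le_rfl⟩
    simpa using this
  have both : ∀ y z t, dist (φ y t) (φ z t) ≤ dist y z * Real.exp (K * |t|) := by
    intro y z t
    rcases le_total 0 t with h | h
    · rw [abs_of_nonneg h]; exact fwd y z t h
    · rw [abs_of_nonpos h]; simpa using bwd y z (-t) (by linarith)
  refine ⟨φ, h0, hd, ?_, ?_⟩
  · rw [continuous_iff_continuousAt]
    rintro ⟨y, t⟩
    rw [ContinuousAt, tendsto_iff_dist_tendsto_zero]
    have h1 : Tendsto (fun p : E × ℝ ↦ dist p.1 y * Real.exp (K * |p.2|) + dist (φ y p.2) (φ y t))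
        (nhds (y, t)) (nhds 0) := by
      have : Continuous (fun p : E × ℝ ↦
          dist p.1 y * Real.exp (K * |p.2|) + dist (φ y p.2) (φ y t)) := by
        have := hc y
        fun_prop
      have h2 := this.tendsto (y, t)
      simpa using h2
    refine squeeze_zero (fun _ ↦ dist_nonneg) (fun p ↦ ?_) h1
    exact (dist_triangle _ (φ y p.2) _).trans (by gcongr; exact both _ _ _)
  · intro y s t
    have : (fun t ↦ φ y (s + t)) = φ (φ y s) := by
      refine ODE_solution_unique_univ (v := fun _ ↦ F) (s := fun _ ↦ univ) (t₀ := 0) (K := K)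
        (fun _ ↦ hF.lipschitzOnWith)
        (fun t ↦ ⟨?_, mem_univ _⟩) (fun t ↦ ⟨hd _ t, mem_univ _⟩) (by simp [h0])
      simpa using (hd y (s + t)).comp_const_add s t
    exact congrFun this t

/-! ### Calculus on intervals -/

theorem le_of_deriv_nonneg {f f' : ℝ → ℝ} {p q : ℝ}
    (hf : ∀ t ∈ Icc p q, HasDerivAt f (f' t) t) (h : ∀ t ∈ Icc p q, 0 ≤ f' t) (hpq : p ≤ q) :
    f p ≤ f q := by
  have : MonotoneOn f (Icc p q) := by
    refine monotoneOn_of_hasDerivWithinAt_nonneg (convex_Icc p q)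
      (fun t ht ↦ (hf t ht).continuousAt.continuousWithinAt)
      (fun t ht ↦ (hf t (interior_subset ht)).hasDerivWithinAt)
      (fun t ht ↦ h t (interior_subset ht))
  exact this ⟨le_rfl, hpq⟩ ⟨hpq, le_rfl⟩ hpq

theorem lt_of_deriv_pos {f f' : ℝ → ℝ} {p q : ℝ}
    (hf : ∀ t ∈ Icc p q, HasDerivAt f (f' t) t) (h : ∀ t ∈ Icc p q, 0 < f' t) (hpq : p < q) :
    f p < f q := by
  have : StrictMonoOn f (Icc p q) := by
    refine strictMonoOn_of_hasDerivWithinAt_pos (convex_Icc p q)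
      (fun t ht ↦ (hf t ht).continuousAt.continuousWithinAt)
      (fun t ht ↦ (hf t (interior_subset ht)).hasDerivWithinAt)
      (fun t ht ↦ h t (interior_subset ht))
  exact this ⟨le_rfl, hpq.le⟩ ⟨hpq.le, le_rfl⟩ hpq

theorem hasDerivAt_mul_exp {f : ℝ → ℝ} {f' t : ℝ} (m : ℝ) (hf : HasDerivAt f f' t) :
    HasDerivAt (fun t ↦ f t * Real.exp (m * t)) ((f' + m * f t) * Real.exp (m * t)) t := by
  have h1 : HasDerivAt (fun t : ℝ ↦ Real.exp (m * t)) (Real.exp (m * t) * (m * 1)) t :=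
    ((hasDerivAt_id t).const_mul m).exp
  exact (hf.mul h1).congr_deriv (by ring)

/-- The differential inequality `f' ≥ -m f` in integrated form. -/
theorem mul_exp_le {f f' : ℝ → ℝ} {p q : ℝ} (m : ℝ)
    (hf : ∀ t ∈ Icc p q, HasDerivAt f (f' t) t) (h : ∀ t ∈ Icc p q, 0 ≤ f' t + m * f t)
    (hpq : p ≤ q) : f p * Real.exp (m * p) ≤ f q * Real.exp (m * q) :=
  le_of_deriv_nonneg (f := fun t ↦ f t * Real.exp (m * t))
    (f' := fun t ↦ (f' t + m * f t) * Real.exp (m * t))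
    (fun t ht ↦ hasDerivAt_mul_exp m (hf t ht))
    (fun t ht ↦ mul_nonneg (h t ht) (Real.exp_pos _).le) hpq

theorem nonneg_of_mul_exp {f f' : ℝ → ℝ} {p q : ℝ} (m : ℝ)
    (hf : ∀ t ∈ Icc p q, HasDerivAt f (f' t) t) (h : ∀ t ∈ Icc p q, 0 ≤ f' t + m * f t)
    (hpq : p ≤ q) (h0 : 0 ≤ f p) : 0 ≤ f q := by
  have h1 := mul_exp_le m hf h hpq
  have h2 : 0 ≤ f p * Real.exp (m * p) := by positivity
  exact nonneg_of_mul_nonneg_left (h2.trans h1) (Real.exp_pos _)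

theorem pos_of_mul_exp {f f' : ℝ → ℝ} {p q : ℝ} (m : ℝ)
    (hf : ∀ t ∈ Icc p q, HasDerivAt f (f' t) t) (h : ∀ t ∈ Icc p q, 0 ≤ f' t + m * f t)
    (hpq : p ≤ q) (h0 : 0 < f p) : 0 < f q := by
  have h1 := mul_exp_le m hf h hpq
  have h2 : 0 < f p * Real.exp (m * p) := by positivity
  exact pos_of_mul_pos_left (h2.trans_le h1) (Real.exp_pos _).le

theorem exists_lt_of_deriv_neg {f : ℝ → ℝ} {f' p t : ℝ} (hf : HasDerivAt f f' t) (h : f' < 0)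
    (hp : p < t) : ∃ r, p < r ∧ r < t ∧ f t < f r := by
  have h1 := hf.tendsto_slope.eventually (gt_mem_nhds h)
  have h2 : ∀ᶠ r in nhdsWithin t (Iio t), slope f t r < 0 :=
    h1.filter_mono (nhdsWithin_mono _ fun r hr ↦ ne_of_lt hr)
  obtain ⟨r, ⟨hr1, hr2⟩, hr3⟩ := ((h2.and (Ioo_mem_nhdsLT hp))).exists.imp fun r hr ↦
    (⟨⟨hr.1, hr.2.1⟩, hr.2.2⟩ : (slope f t r < 0 ∧ p < r) ∧ r < t)
  refine ⟨r, hr2, hr3, ?_⟩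
  rw [slope_def_field] at hr1
  rcases div_neg_iff.1 hr1 with h | h <;> linarith

theorem eventually_lt_of_deriv_neg {f : ℝ → ℝ} {f' t : ℝ} (hf : HasDerivAt f f' t)
    (h : f' < 0) : ∀ᶠ r in nhdsWithin t (Ioi t), f r < f t := by
  have h1 := hf.tendsto_slope.eventually (gt_mem_nhds h)
  have h2 : ∀ᶠ r in nhdsWithin t (Ioi t), slope f t r < 0 :=
    h1.filter_mono (nhdsWithin_mono _ fun r hr ↦ ne_of_gt hr)
  filter_upwards [h2, self_mem_nhdsWithin] with r hr hr'
  rw [slope_def_field] at hr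
  have : t < r := hr'
  rcases div_neg_iff.1 hr with h | h <;> linarith

/-- Two functions that start negative stay negative if, at the first time one of them vanishes,
its derivative is negative. -/
theorem barrier_two {f g f' g' : ℝ → ℝ} {T : ℝ}
    (hf : ∀ t ∈ Icc 0 T, HasDerivAt f (f' t) t) (hg : ∀ t ∈ Icc 0 T, HasDerivAt g (g' t) t)
    (f0 : f 0 < 0) (g0 : g 0 < 0)
    (hf' : ∀ t ∈ Icc 0 T, f t = 0 → g t ≤ 0 → f' t < 0)
    (hg' : ∀ t ∈ Icc 0 T, g t = 0 → f t ≤ 0 → g' t < 0) :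
    ∀ t ∈ Icc 0 T, f t < 0 ∧ g t < 0 := by
  by_contra! hcon
  obtain ⟨t₀, ht₀, hbad⟩ := hcon
  have hfc : ContinuousOn f (Icc 0 T) := fun t ht ↦ (hf t ht).continuousAt.continuousWithinAt
  have hgc : ContinuousOn g (Icc 0 T) := fun t ht ↦ (hg t ht).continuousAt.continuousWithinAt
  set B : Set ℝ := {t ∈ Icc 0 T | 0 ≤ max (f t) (g t)} with hB
  have hBc : IsClosed B := by
    have := (hfc.sup hgc).preimage_isClosed_of_isClosed isClosed_Icc (isClosed_Ici (a := (0 : ℝ)))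
    exact this
  have hBne : B.Nonempty := by
    refine ⟨t₀, ht₀, ?_⟩
    rcases lt_or_ge (f t₀) 0 with h | h
    · exact le_max_of_le_right (hbad h)
    · exact le_max_of_le_left h
  have hBb : BddBelow B := ⟨0, fun t ht ↦ ht.1.1⟩
  have hτ := hBc.csInf_mem hBne hBb
  set τ := sInf B
  have hbefore : ∀ t, 0 ≤ t → t < τ → f t < 0 ∧ g t < 0 := by
    intro t h0 ht
    by_contra h
    refine absurd (csInf_le hBb (show t ∈ B from ⟨⟨h0, ht.le.trans hτ.1.2⟩, ?_⟩)) (not_le.2 ht)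
    by_contra h'
    rw [not_le, max_lt_iff] at h'
    exact h h'
  have hτpos : 0 < τ := by
    rcases hτ.1.1.lt_or_eq with h | h
    · exact h
    · have := hτ.2
      rw [← h] at this
      rcases le_max_iff.1 this with h | h <;> linarith
  have hcl : ∀ u : ℝ → ℝ, ContinuousAt u τ → (∀ t, 0 ≤ t → t < τ → u t < 0) → u τ ≤ 0 := by
    intro u hu h
    refine le_of_tendsto (hu.tendsto.mono_left (nhdsWithin_le_nhds (s := Iio τ))) ?_
    filter_upwards [Ioo_mem_nhdsLT hτpos] with t ht
    exact (h t ht.1.le ht.2).le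
  have hfτ := hcl f (hf τ hτ.1).continuousAt fun t h1 h2 ↦ (hbefore t h1 h2).1
  have hgτ := hcl g (hg τ hτ.1).continuousAt fun t h1 h2 ↦ (hbefore t h1 h2).2
  rcases le_max_iff.1 hτ.2 with h | h
  · have h0 : f τ = 0 := le_antisymm hfτ h
    obtain ⟨r, h1, h2, h3⟩ := exists_lt_of_deriv_neg (hf τ hτ.1) (hf' τ hτ.1 h0 hgτ) hτpos
    linarith [(hbefore r h1.le h2).1]
  · have h0 : g τ = 0 := le_antisymm hgτ h
    obtain ⟨r, h1, h2, h3⟩ := exists_lt_of_deriv_neg (hg τ hτ.1) (hg' τ hτ.1 h0 hfτ) hτpos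
    linarith [(hbefore r h1.le h2).2]

theorem barrier_one {f f' : ℝ → ℝ} {T : ℝ}
    (hf : ∀ t ∈ Icc 0 T, HasDerivAt f (f' t) t) (f0 : f 0 < 0)
    (hf' : ∀ t ∈ Icc 0 T, f t = 0 → f' t < 0) : ∀ t ∈ Icc 0 T, f t < 0 :=
  fun t ht ↦ (barrier_two hf hf f0 f0 (fun t ht h _ ↦ hf' t ht h) (fun t ht h _ ↦ hf' t ht h) t ht).1

/-! ### Orbits in the coordinates `X = x²`, `k = ϑ / x`, `w = u + b x² / 2` -/

/-- `(X, k, w)` solves, on the time set `I`, the Lorenz-like system written in the coordinates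
`X = x²`, `k = ϑ / x`, `w = u + b x² / 2`,
with admissible parameters and with `X, w > 0`. -/
structure Orbit (l a b : ℝ) (I : Set ℝ) (X k w : ℝ → ℝ) : Prop where
  l0 : 0 ≤ l
  a0 : 0 < a
  b0 : 0 < b
  b2 : b ≤ 2
  dX : ∀ t ∈ I, HasDerivAt X (2 * k t * X t) t
  dk : ∀ t ∈ I, HasDerivAt k (1 - l * k t - k t ^ 2 - (1 - b / 2) * X t - w t) t
  dw : ∀ t ∈ I, HasDerivAt w (a * (b / 2 * X t - w t)) t
  X0 : ∀ t ∈ I, 0 < X t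
  w0 : ∀ t ∈ I, 0 < w t

/-- The function `j = k² + l k - 1 + w + (1 - b/2) X / 2`; along orbits `k' = -j - (1 - b/2) X / 2`,
so that `k` decreases as long as `j ≥ 0`. -/
noncomputable def jfun (l b X k w : ℝ) : ℝ := k ^ 2 + l * k - 1 + w + (1 - b / 2) * X / 2

/-- The function `Z = w' - 2 k w`; its sign is that of the derivative of `w / X`. -/
noncomputable def zfun (a b X k w : ℝ) : ℝ := a * (b / 2 * X - w) - 2 * k * w

namespace Orbit

variable {l a b : ℝ} {I : Set ℝ} {X k w : ℝ → ℝ} {p q T : ℝ}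

theorem mono {I' : Set ℝ} (h : Orbit l a b I X k w) (hI : I' ⊆ I) : Orbit l a b I' X k w where
  l0 := h.l0
  a0 := h.a0
  b0 := h.b0
  b2 := h.b2
  dX t ht := h.dX t (hI ht)
  dk t ht := h.dk t (hI ht)
  dw t ht := h.dw t (hI ht)
  X0 t ht := h.X0 t (hI ht)
  w0 t ht := h.w0 t (hI ht)

theorem c_nonneg (h : Orbit l a b I X k w) : 0 ≤ 1 - b / 2 := by linarith [h.b2]

theorem dk_nonpos (h : Orbit l a b I X k w) {t : ℝ} (ht : t ∈ I)
    (hj : 0 ≤ jfun l b (X t) (k t) (w t)) :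
    1 - l * k t - k t ^ 2 - (1 - b / 2) * X t - w t ≤ 0 := by
  have := mul_nonneg h.c_nonneg (h.X0 t ht).le
  unfold jfun at hj
  linarith

theorem k_anti (h : Orbit l a b (Icc p q) X k w)
    (hj : ∀ t ∈ Icc p q, 0 ≤ jfun l b (X t) (k t) (w t)) (hpq : p ≤ q) : k q ≤ k p := by
  have := le_of_deriv_nonneg (f := fun t ↦ -k t) (fun t ht ↦ (h.dk t ht).neg)
    (fun t ht ↦ by linarith [h.dk_nonpos ht (hj t ht)]) hpq
  simpa using this

theorem z_nonneg (h : Orbit l a b (Icc p q) X k w)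
    (hj : ∀ t ∈ Icc p q, 0 ≤ jfun l b (X t) (k t) (w t))
    (hz : 0 ≤ zfun a b (X p) (k p) (w p)) : ∀ t ∈ Icc p q, 0 ≤ zfun a b (X t) (k t) (w t) := by
  intro t ht
  have hsub : Icc p t ⊆ Icc p q := Icc_subset_Icc_right ht.2
  refine nonneg_of_mul_exp (f := fun t ↦ zfun a b (X t) (k t) (w t))
    (f' := fun t ↦ a * (b / 2 * (2 * k t * X t) - a * (b / 2 * X t - w t)) -
      (2 * (1 - l * k t - k t ^ 2 - (1 - b / 2) * X t - w t) * w t +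
        2 * k t * (a * (b / 2 * X t - w t)))) a
    (fun r hr ↦ ?_) (fun r hr ↦ ?_) ht.1 hz
  · have hr' := hsub hr
    exact ((((h.dX r hr').const_mul _).sub (h.dw r hr')).const_mul _).sub
      (((h.dk r hr').const_mul 2).mul (h.dw r hr'))
  · have h1 := h.dk_nonpos (hsub hr) (hj r (hsub hr))
    have h2 := mul_nonneg_of_nonpos_of_nonpos h1 (neg_nonpos.2 (h.w0 r (hsub hr)).le)
    simp only [zfun]
    nlinarith

theorem hasDerivAt_J (h : Orbit l a b I X k w) {t : ℝ} (ht : t ∈ I) :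
    HasDerivAt (fun t ↦ X t * jfun l b (X t) (k t) (w t))
      (-l * (X t * jfun l b (X t) (k t) (w t)) +
        X t * (a * (b / 2 * X t - w t) - l * (1 - b / 2) * X t / 2)) t := by
  have h1 := (((((h.dk t ht).pow 2).add ((h.dk t ht).const_mul l)).sub_const 1).add (h.dw t ht)).add
    (((h.dX t ht).const_mul (1 - b / 2)).div_const 2)
  refine ((h.dX t ht).mul h1).congr_deriv ?_
  simp only [jfun, Pi.add_apply, Pi.pow_apply]
  ring

theorem hasDerivAt_ratio (h : Orbit l a b I X k w) {t : ℝ} (ht : t ∈ I) :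
    HasDerivAt (fun t ↦ w t / X t) (zfun a b (X t) (k t) (w t) / X t) t := by
  refine ((h.dw t ht).div (h.dX t ht) (h.X0 t ht).ne').congr_deriv ?_
  have := (h.X0 t ht).ne'
  simp only [zfun]
  field_simp

/-- As `w / X` is nondecreasing, the function `X j e^{lt}` first increases and then decreases; so
a nonnegative `j` that is positive at both ends is positive in between. -/
theorem j_pos (h : Orbit l a b (Icc p q) X k w)
    (hj : ∀ t ∈ Icc p q, 0 ≤ jfun l b (X t) (k t) (w t))
    (hz : 0 ≤ zfun a b (X p) (k p) (w p))
    (hp : 0 < jfun l b (X p) (k p) (w p)) (hq : 0 < jfun l b (X q) (k q) (w q)) :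
    ∀ t ∈ Icc p q, 0 < jfun l b (X t) (k t) (w t) := by
  intro t ht
  by_contra hcon
  have hjt : jfun l b (X t) (k t) (w t) = 0 := le_antisymm (not_lt.1 hcon) (hj t ht)
  have hZ := h.z_nonneg hj hz
  have hrho : ∀ r s, p ≤ r → r ≤ s → s ≤ q → w r / X r ≤ w s / X s := by
    intro r s h1 h2 h3
    have hs : Icc r s ⊆ Icc p q := Icc_subset_Icc h1 h3
    exact le_of_deriv_nonneg (f := fun t ↦ w t / X t)
      (fun u hu ↦ h.hasDerivAt_ratio (hs hu))
      (fun u hu ↦ div_nonneg (hZ u (hs hu)) (h.X0 u (hs hu)).le) h2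
  have hpsi : ∀ r ∈ Icc p q, a * (b / 2 * X r - w r) - l * (1 - b / 2) * X r / 2 =
      X r * (a * (b / 2 - w r / X r) - l * (1 - b / 2) / 2) := by
    intro r hr
    have := (h.X0 r hr).ne'
    field_simp
  have hXt := h.X0 t ht
  rcases le_total 0 (a * (b / 2 - w t / X t) - l * (1 - b / 2) / 2) with hs | hs
  · have hsub : Icc p t ⊆ Icc p q := Icc_subset_Icc_right ht.2
    have h0 : 0 < X t * jfun l b (X t) (k t) (w t) := by
      refine pos_of_mul_exp (f := fun t ↦ X t * jfun l b (X t) (k t) (w t)) l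
        (fun r hr ↦ h.hasDerivAt_J (hsub hr)) (fun r hr ↦ ?_) ht.1
        (mul_pos (h.X0 p ⟨le_rfl, ht.1.trans ht.2⟩) hp)
      have h1 := hrho r t hr.1 hr.2 ht.2
      have h2 : 0 ≤ a * (b / 2 - w r / X r) - l * (1 - b / 2) / 2 := by nlinarith [h.a0]
      have hX := h.X0 r (hsub hr)
      rw [hpsi r (hsub hr)]
      have : 0 ≤ X r * (X r * (a * (b / 2 - w r / X r) - l * (1 - b / 2) / 2)) := by positivity
      linarith
    rw [hjt] at h0
    simp at h0
  · have hsub : Icc t q ⊆ Icc p q := Icc_subset_Icc_left ht.1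
    have h0 := mul_exp_le (f := fun t ↦ -(X t * jfun l b (X t) (k t) (w t))) l
        (fun r hr ↦ (h.hasDerivAt_J (hsub hr)).neg) (fun r hr ↦ ?_) ht.2
    · have h1 : 0 < X q * jfun l b (X q) (k q) (w q) * Real.exp (l * q) :=
        mul_pos (mul_pos (h.X0 q ⟨ht.1.trans ht.2, le_rfl⟩) hq) (Real.exp_pos _)
      rw [hjt] at h0
      simp only [mul_zero, neg_zero, zero_mul] at h0
      linarith
    · have h1 := hrho t r ht.1 hr.1 hr.2
      have h2 : a * (b / 2 - w r / X r) - l * (1 - b / 2) / 2 ≤ 0 := by nlinarith [h.a0]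
      have hX := h.X0 r (hsub hr)
      rw [hpsi r (hsub hr)]
      have : 0 ≤ X r * (X r * -(a * (b / 2 - w r / X r) - l * (1 - b / 2) / 2)) := by
        have := neg_nonneg.2 h2
        positivity
      linarith

theorem X_mono (h : Orbit l a b (Icc p q) X k w) (hk : ∀ t ∈ Icc p q, 0 ≤ k t) (hpq : p ≤ q) :
    X p ≤ X q :=
  le_of_deriv_nonneg h.dX (fun t ht ↦ by have := h.X0 t ht; have := hk t ht; positivity) hpq

/-! ### A priori bounds -/

/-- An explicit bound, uniform in the starting point with `X, w ≤ 1`, for orbits as long as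
`-(l+2) ≤ k ≤ 1`. -/
noncomputable def bnd (l a b : ℝ) : ℝ :=
  (3 * a * (1 + l ^ 2 / 4 + 1) + 1 + 3 * a * (l + 2) + 4 * (1 + l ^ 2 / 4) + 5 + 4 * (l + 2)) +
  (3 * a * (1 + l ^ 2 / 4 + 1) + 1 + 3 * (3 * a * (1 + l ^ 2 / 4 + 1) + 1 + 3 * a * (l + 2) +
    4 * (1 + l ^ 2 / 4) + 5 + 4 * (l + 2)) + 3 * a * (l + 2)) * 2 / (a * b)

/-- The functions `a b X / 2 - 3 w + 3 a k` and `w + 4 k` cannot cross certain levels upwards. -/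
theorem bounds (h : Orbit l a b (Icc 0 T) X k w)
    (hk : ∀ t ∈ Icc 0 T, -(l + 2) ≤ k t ∧ k t ≤ 1) (hX : X 0 ≤ 1) (hw : w 0 ≤ 1) :
    ∀ t ∈ Icc 0 T, X t < bnd l a b ∧ w t < bnd l a b := by
  intro t ht
  have hT : (0 : ℝ) ∈ Icc 0 T := ⟨le_rfl, ht.1.trans ht.2⟩
  have l0 := h.l0
  have a0 := h.a0
  have b0 := h.b0
  have b2 := h.b2
  have c0 := h.c_nonneg
  set H := 1 + l ^ 2 / 4 with hH
  set A := 3 * a * (H + 1) + 1 with hA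
  set D := 3 * a * (l + 2) with hD
  set Q := A + D + 4 * H + 5 with hQ
  have hH0 : 0 ≤ H := by positivity
  have hA0 : 0 < A := by positivity
  have hD0 : 0 ≤ D := by positivity
  have hHk : ∀ t, 1 - l * k t - k t ^ 2 ≤ H := fun t ↦ by nlinarith [sq_nonneg (k t + l / 2)]
  have P1 : ∀ t ∈ Icc 0 T, a * b / 2 * X t - 3 * w t + 3 * a * k t - A < 0 := by
    refine barrier_one (fun t ht ↦ (((((h.dX t ht).const_mul _).sub
      ((h.dw t ht).const_mul _)).add ((h.dk t ht).const_mul _)).sub_const _)) ?_ ?_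
    · have h1 := h.w0 0 hT
      have h2 := (hk 0 hT).2
      have h3 : a * b / 2 * X 0 ≤ a * 1 * 1 := by
        have : b / 2 ≤ 1 := by linarith
        have := (h.X0 0 hT).le
        rw [mul_div_assoc]
        gcongr
      have h4 : a * k 0 ≤ a := by nlinarith
      nlinarith [mul_nonneg a0.le hH0]
    · intro t ht h0
      have hx := h.X0 t ht
      have hw := h.w0 t ht
      have hk2 := (hk t ht).2
      have h1 : 0 < a * b / 2 * X t := by positivity
      have h2 : a * (1 - l * k t - k t ^ 2) ≤ a * H := by gcongr; exact hHk t
      have h3 : 0 ≤ a * ((1 - b / 2) * X t) := by positivity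
      have h4 : a * k t ≤ a := by nlinarith
      have h5 : (k t - 1) * (a * b / 2 * X t) ≤ 0 :=
        mul_nonpos_of_nonpos_of_nonneg (by linarith) h1.le
      nlinarith
  have P2 : ∀ t ∈ Icc 0 T, w t + 4 * k t - Q < 0 := by
    refine barrier_one (fun t ht ↦ (((h.dw t ht).add ((h.dk t ht).const_mul _)).sub_const _)) ?_ ?_
    · have h2 := (hk 0 hT).2
      linarith
    · intro t ht h0
      have hp := P1 t ht
      have hx := h.X0 t ht
      have hw := h.w0 t ht
      have h1 := hHk t
      have h2 : a * -k t ≤ a * (l + 2) := by gcongr; linarith [(hk t ht).1]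
      have h3 : 0 ≤ (1 - b / 2) * X t := by positivity
      have h4 : 0 < a * w t := by positivity
      have h5 := (hk t ht).2
      nlinarith
  have hp1 := P1 t ht
  have hp2 := P2 t ht
  have hk1 := hk t ht
  have h2 : a * -k t ≤ a * (l + 2) := by gcongr; linarith
  have hw1 : w t < Q + 4 * (l + 2) := by linarith
  have hN : a * b / 2 * X t < A + 3 * (Q + 4 * (l + 2)) + D := by linarith
  have hX1 : X t < (A + 3 * (Q + 4 * (l + 2)) + D) * 2 / (a * b) := by
    rw [lt_div_iff₀ (by positivity)]
    linarith
  have e : bnd l a b = (Q + 4 * (l + 2)) + (A + 3 * (Q + 4 * (l + 2)) + D) * 2 / (a * b) := rfl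
  have h3 : 0 < (A + 3 * (Q + 4 * (l + 2)) + D) * 2 / (a * b) := (h.X0 t ht).trans hX1
  have h4 : 0 < Q + 4 * (l + 2) := (h.w0 t ht).trans hw1
  constructor <;> linarith

end Orbit

/-! ### Starting values -/

/-- The starting values used below: `κ` is the slope of the unstable eigendirection of the origin
and `ω` is chosen so that `w / X` is stationary at the start. -/
structure Start (l a b x κ ω : ℝ) : Prop where
  x0 : 0 < x
  x1 : x ≤ 1 / 10
  κ0 : 0 < κ
  eq : κ ^ 2 + l * κ = 1
  ω0 : 0 < ω
  z : zfun a b x κ ω = 0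

namespace Start

variable {l a b x κ ω : ℝ}

theorem ω_lt (h : Start l a b x κ ω) (ha : 0 < a) : ω < b / 2 * x := by
  have h1 := h.z
  have h2 := mul_pos h.κ0 h.ω0
  unfold zfun at h1
  have h3 : 0 < a * (b / 2 * x - ω) := by linarith
  have := pos_of_mul_pos_right h3 ha.le
  linarith

theorem κ_le (h : Start l a b x κ ω) (hl : 0 ≤ l) : κ ≤ 1 := by
  nlinarith [h.eq, mul_nonneg hl h.κ0.le, h.κ0]

theorem j_pos (h : Start l a b x κ ω) (hb : b ≤ 2) : 0 < jfun l b x κ ω := by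
  have h1 := h.eq
  have h2 := h.ω0
  have h3 : 0 ≤ (1 - b / 2) * x := mul_nonneg (by linarith) h.x0.le
  unfold jfun
  linarith

end Start

namespace Orbit

variable {l a b : ℝ} {I : Set ℝ} {X k w : ℝ → ℝ} {T M : ℝ}

/-! ### Large damping: the line `k = -l/2` is not crossed -/

/-- The two quantities `l k + w + (1 - b/2) X - 7/5` and `l w' - w (14/5 - w)` protect each
other from becoming positive. -/
theorem no_crossing_aux (h : Orbit l a b (Icc 0 T) X k w) (hs : Start l a b (X 0) (k 0) (w 0))
    (hl : 49 / 10 < l ^ 2) : ∀ t ∈ Icc 0 T,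
      l * k t + w t + (1 - b / 2) * X t - 7 / 5 < 0 ∧
      l * (a * (b / 2 * X t - w t)) - w t * (14 / 5 - w t) < 0 := by
  have l0 := h.l0
  have a0 := h.a0
  have c0 := h.c_nonneg
  have lpos : 0 < l := by
    rcases l0.lt_or_eq with h | h
    · exact h
    · rw [← h] at hl; norm_num at hl
  have hω := hs.ω_lt a0
  have hX1 := hs.x1
  have hX0 := hs.x0
  have hw0 := hs.ω0
  have hk0 := hs.κ0
  have heq := hs.eq
  have hz := hs.z
  have hbX : b / 2 * X 0 ≤ X 0 := by nlinarith [h.b2]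
  refine barrier_two (fun t ht ↦ ((((h.dk t ht).const_mul l).add (h.dw t ht)).add
      ((h.dX t ht).const_mul _)).sub_const _)
    (fun t ht ↦ (((((h.dX t ht).const_mul (b / 2)).sub (h.dw t ht)).const_mul a).const_mul l).sub
      ((h.dw t ht).mul ((h.dw t ht).const_sub _))) ?_ ?_ ?_ ?_
  · nlinarith
  · unfold zfun at hz
    have h1 : l * (a * (b / 2 * X 0 - w 0)) = 2 * (l * k 0) * w 0 := by
      rw [show a * (b / 2 * X 0 - w 0) = 2 * k 0 * w 0 by linarith]; ring
    rw [h1]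
    have h2 : l * k 0 < 1 := by nlinarith
    nlinarith
  · intro t ht h1 h2
    have hX := h.X0 t ht
    set v := a * (b / 2 * X t - w t)
    set y := (1 - b / 2) * X t
    have hlk : l * k t = 7 / 5 - w t - y := by linarith
    have key : l * (l * (1 - l * k t - k t ^ 2 - y - w t) + v + 2 * k t * y) < 0 := by
      have e : l * (l * (1 - l * k t - k t ^ 2 - y - w t) + v + 2 * k t * y) =
        l ^ 2 * (1 - l * k t - y - w t) - (l * k t) ^ 2 + l * v + 2 * (l * k t) * y := by ring
      rw [e, hlk]
      nlinarith [sq_nonneg (7 / 5 - w t), sq_nonneg (y - 2 / 3 * (7 / 5 - w t))]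
    have key' := neg_of_mul_neg_right key lpos.le
    have e2 : (1 - b / 2) * (2 * k t * X t) = 2 * k t * y := by
      simp only [y]; ring
    rw [e2]
    exact key'
  · intro t ht h1 h2
    have hX := h.X0 t ht
    have hw := h.w0 t ht
    have hbp := h.b0
    have hy : 0 ≤ (1 - b / 2) * X t := by positivity
    have hN : 0 < a * b * X t := by positivity
    have h3 : (a * b * X t) * (l * k t) ≤ (a * b * X t) * (7 / 5 - w t) := by
      gcongr; linarith
    have h4 : 0 < a * (w t) ^ 2 := by positivity
    have h5 : a * (l * (a * (b / 2 * X t - w t))) = a * (w t * (14 / 5 - w t)) := by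
      congr 1; linarith
    nlinarith

/-- For large damping, or moderately large damping and `b` close to `2`, the line `k = -l/2` is not
crossed: `no_crossing_aux` yields `w < 14/5` and `(1 - b/2) X < 7/5`, and at `k = -l/2` one has
`k' = 1 + l²/4 - (1 - b/2) X - w > 0`. -/
theorem no_crossing (h : Orbit l a b (Icc 0 T) X k w) (hs : Start l a b (X 0) (k 0) (w 0))
    (hl : 13 ≤ l ^ 2 ∨ 15 / 2 ≤ l ^ 2 ∧ ∀ t ∈ Icc 0 T, (1 - b / 2) * X t ≤ 1 / 20) :
    ∀ t ∈ Icc 0 T, -(l / 2) < k t := by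
  intro t ht
  have hT : (0 : ℝ) ∈ Icc 0 T := ⟨le_rfl, ht.1.trans ht.2⟩
  have hl' : 15 / 2 ≤ l ^ 2 := by
    rcases hl with h | h
    · linarith
    · exact h.1
  have aux := h.no_crossing_aux hs (by linarith)
  have l0 := h.l0
  have a0 := h.a0
  have c0 := h.c_nonneg
  have lpos : 0 < l := by
    rcases l0.lt_or_eq with h | h
    · exact h
    · rw [← h] at hl'; norm_num at hl'
  have hω := hs.ω_lt a0
  have hX1 := hs.x1
  have hX0 := hs.x0
  have hbX : b / 2 * X 0 ≤ X 0 := by nlinarith [h.b2]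
  have hcX : (1 - b / 2) * X 0 ≤ X 0 := by nlinarith [h.b0]
  have hw : ∀ t ∈ Icc 0 T, w t - 14 / 5 < 0 := by
    refine barrier_one (fun t ht ↦ (h.dw t ht).sub_const _) (by linarith) (fun t ht h0 ↦ ?_)
    have h1 := (aux t ht).2
    have h2 : l * (a * (b / 2 * X t - w t)) < 0 := by
      rw [show w t = 14 / 5 by linarith] at h1 ⊢
      linarith
    exact neg_of_mul_neg_right h2 l0
  have hX : ∀ t ∈ Icc 0 T, (1 - b / 2) * X t - 7 / 5 < 0 := by
    refine barrier_one (fun t ht ↦ ((h.dX t ht).const_mul _).sub_const _) (by linarith)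
      (fun t ht h0 ↦ ?_)
    have h1 := (aux t ht).1
    have h2 := h.w0 t ht
    have h3 : l * k t < 0 := by linarith
    have h4 : k t < 0 := neg_of_mul_neg_right h3 l0
    have e : (1 - b / 2) * (2 * k t * X t) = 2 * k t * ((1 - b / 2) * X t) := by ring
    rw [e, show (1 - b / 2) * X t = 7 / 5 by linarith]
    linarith
  have hk : ∀ t ∈ Icc 0 T, -(l / 2) - k t < 0 := by
    refine barrier_one (fun t ht ↦ (h.dk t ht).const_sub _) (by linarith [hs.κ0]) (fun t ht h0 ↦ ?_)
    have h1 := hw t ht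
    have h2 := hX t ht
    rw [show k t = -(l / 2) by linarith]
    rcases hl with h3 | ⟨h3, h4⟩
    · nlinarith
    · have := h4 t ht
      nlinarith
  linarith [hk t ht]

/-! ### Zero damping: an energy -/

/-- For `l = 0` the energy `X j - w² / b` is nondecreasing. -/
theorem hasDerivAt_energy (h : Orbit 0 a b I X k w) {t : ℝ} (ht : t ∈ I) :
    HasDerivAt (fun t ↦ X t * jfun 0 b (X t) (k t) (w t) - w t ^ 2 / b)
      (2 * (a * (b / 2 * X t - w t)) ^ 2 / (a * b)) t := by
  refine ((h.hasDerivAt_J ht).sub (((h.dw t ht).pow 2).div_const b)).congr_deriv ?_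
  have := h.a0.ne'
  have := h.b0.ne'
  field_simp
  ring

/-- The energy starts above `X(0) w(0) / 2`, since `w(0) < b X(0) / 2`. -/
theorem J_lower (h : Orbit 0 a b (Icc 0 T) X k w) (hs : Start 0 a b (X 0) (k 0) (w 0)) :
    ∀ t ∈ Icc 0 T, X 0 * w 0 / 2 ≤ X t * jfun 0 b (X t) (k t) (w t) := by
  intro t ht
  have hsub : Icc 0 t ⊆ Icc 0 T := Icc_subset_Icc_right ht.2
  have a0 := h.a0
  have b0 := h.b0
  have h1 := le_of_deriv_nonneg (fun r hr ↦ h.hasDerivAt_energy (hsub hr))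
    (fun r hr ↦ by positivity) ht.1
  have h2 : 0 ≤ w t ^ 2 / b := by positivity
  have h3 : w 0 ^ 2 / b ≤ X 0 * w 0 / 2 := by
    rw [div_le_iff₀ b0]
    nlinarith [hs.ω_lt a0, hs.ω0]
  have h4 : X 0 * w 0 ≤ X 0 * jfun 0 b (X 0) (k 0) (w 0) := by
    gcongr
    · exact hs.x0.le
    · have := hs.eq
      have : 0 ≤ (1 - b / 2) * X 0 := mul_nonneg h.c_nonneg hs.x0.le
      unfold jfun
      linarith
  linarith

theorem j_pos_of_zero (h : Orbit 0 a b (Icc 0 T) X k w) (hs : Start 0 a b (X 0) (k 0) (w 0)) :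
    ∀ t ∈ Icc 0 T, 0 < jfun 0 b (X t) (k t) (w t) := by
  intro t ht
  have h1 := h.J_lower hs t ht
  have h2 := mul_pos hs.x0 hs.ω0
  exact pos_of_mul_pos_right (by linarith) (h.X0 t ht).le

end Orbit

theorem linear_growth {f f' : ℝ → ℝ} {p q c : ℝ}
    (hf : ∀ t ∈ Icc p q, HasDerivAt f (f' t) t) (h : ∀ t ∈ Icc p q, c ≤ f' t) (hpq : p ≤ q) :
    f p + c * (q - p) ≤ f q := by
  have := le_of_deriv_nonneg (f := fun t ↦ f t - c * t)
    (fun t ht ↦ (hf t ht).sub ((hasDerivAt_id t).const_mul c))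
    (fun t ht ↦ by linarith [h t ht]) hpq
  linarith

namespace Orbit

variable {l a b : ℝ} {I : Set ℝ} {X k w : ℝ → ℝ} {T M : ℝ}

/-! ### Orbits that exist for all positive times -/

theorem Icc_sub {p q : ℝ} (hp : 0 ≤ p) : Icc p q ⊆ Ici (0 : ℝ) := fun _ ht ↦ hp.trans ht.1

/-- The case `b = 2` of `exists_k_neg`. Were `k ≥ 0` forever, the orbit would converge to the
equilibrium `(X, k, w) = (1, 0, 1)`, with `w < X < 1` all along. The slope `h = k / (1 - X)` then
satisfies `h' ≥ ε (1 + h²)` because `l² < 8`, and blows up in finite time. -/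
theorem exists_k_neg_two (h : Orbit l a 2 (Ici 0) X k w)
    (hj : ∀ t, 0 ≤ t → 0 ≤ jfun l 2 (X t) (k t) (w t)) (hz : 0 ≤ zfun a 2 (X 0) (k 0) (w 0))
    (hk0 : 0 < k 0) (hM : ∀ t, 0 ≤ t → X t ≤ M) (hc : l ^ 2 < 8) :
    ∃ t, 0 ≤ t ∧ k t < 0 := by
  by_contra! hk
  have l0 := h.l0
  have a0 := h.a0
  have anti : ∀ s t, 0 ≤ s → s ≤ t → k t ≤ k s := fun s t hs hst ↦
    (h.mono (Icc_sub hs)).k_anti (fun t ht ↦ hj t (hs.trans ht.1)) hst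
  have Xmono : ∀ s t, 0 ≤ s → s ≤ t → X s ≤ X t := fun s t hs hst ↦
    (h.mono (Icc_sub hs)).X_mono (fun t ht ↦ hk t (hs.trans ht.1)) hst
  have X00 : 0 < X 0 := h.X0 0 self_mem_Ici
  -- `X` is bounded and grows at the rate `2 k X`
  have ksmall : ∀ ε, 0 < ε → ∃ t, 0 ≤ t ∧ k t < ε := by
    intro ε hε
    by_contra! hcon
    set q := M / (2 * ε * X 0) with hq
    have hM0 : 0 < M := X00.trans_le (hM 0 le_rfl)
    have hq0 : 0 ≤ q := by positivity
    have h1 := linear_growth (fun t ht ↦ h.dX t (Icc_sub le_rfl ht)) (c := 2 * ε * X 0)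
      (fun t ht ↦ ?_) hq0
    · have h2 : 2 * ε * X 0 * (q - 0) = M := by rw [hq]; field_simp; ring
      linarith [hM q hq0]
    · have h1 := hcon t ht.1
      have h2 := Xmono 0 t le_rfl ht.1
      have h3 : 0 ≤ 2 * k t := by linarith
      gcongr
  have hwX : ∀ t, 0 ≤ t → w t < X t := by
    intro t ht
    have h0 : 0 < 1 - w 0 / X 0 := by
      have h1 := h.w0 0 self_mem_Ici
      unfold zfun at hz
      have h2 : 0 < a * (X 0 - w 0) := by nlinarith [mul_pos hk0 h1]
      have h3 := pos_of_mul_pos_right h2 a0.le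
      rw [sub_pos, div_lt_one X00]
      linarith
    have h1 := pos_of_mul_exp (f := fun t ↦ 1 - w t / X t) a
      (fun r hr ↦ (h.hasDerivAt_ratio (Icc_sub le_rfl hr)).const_sub 1) (fun r hr ↦ ?_) ht h0
    · rw [sub_pos, div_lt_one (h.X0 t ht)] at h1
      exact h1
    · have hX := h.X0 r hr.1
      have hw := h.w0 r hr.1
      have hkr := hk r hr.1
      have e : -(zfun a 2 (X r) (k r) (w r) / X r) + a * (1 - w r / X r) =
          2 * k r * w r / X r := by
        unfold zfun; field_simp; ring
      rw [e]
      positivity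
  have wmono : ∀ s t, 0 ≤ s → s < t → w s < w t := fun s t hs hst ↦
    lt_of_deriv_pos (fun r hr ↦ h.dw r (Icc_sub hs hr))
      (fun r hr ↦ mul_pos a0 (by linarith [hwX r (hs.trans hr.1)])) hst
  -- a zero of `k` would force `k = 0`, hence `w = 1`, from then on, but `w` is strictly increasing
  have kpos : ∀ t, 0 ≤ t → 0 < k t := by
    intro t ht
    by_contra hcon
    have hk' : ∀ r, t ≤ r → k r = 0 := fun r hr ↦
      le_antisymm ((anti t r ht hr).trans (not_lt.1 hcon)) (hk r (ht.trans hr))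
    have hw1 : ∀ r, t < r → w r = 1 := by
      intro r hr
      have h1 : HasDerivAt k 0 r := by
        refine (hasDerivAt_const r (0 : ℝ)).congr_of_eventuallyEq ?_
        filter_upwards [Ioi_mem_nhds hr] with s hs
        exact hk' s (le_of_lt hs)
      have h2 := (h.dk r (ht.trans hr.le)).unique h1
      rw [hk' r hr.le] at h2
      linarith
    have := wmono (t + 1) (t + 2) (by linarith) (by linarith)
    rw [hw1 _ (by linarith), hw1 _ (by linarith)] at this
    exact lt_irrefl _ this
  -- otherwise `w` exceeds some `1 + η` with `η > 0`, and then `k' ≤ -η` makes `k` negative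
  have hX1 : ∀ t, 0 ≤ t → X t < 1 := by
    intro t₁ ht₁
    by_contra hcon
    have h1 : X t₁ < X (t₁ + 1) := lt_of_deriv_pos (fun r hr ↦ h.dX r (Icc_sub ht₁ hr))
      (fun r hr ↦ by
        have := kpos r (ht₁.trans hr.1)
        have := h.X0 r (ht₁.trans hr.1)
        positivity) (by linarith)
    obtain ⟨η, hη, hXη⟩ : ∃ η, 0 < η ∧ X (t₁ + 1) = 1 + 2 * η :=
      ⟨(X (t₁ + 1) - 1) / 2, by linarith, by ring⟩
    set t₂ := t₁ + 1
    have ht₂ : 0 ≤ t₂ := by linarith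
    have hw3 : ∃ t₃, t₂ ≤ t₃ ∧ 1 + η ≤ w t₃ := by
      by_contra! hcon
      set q := t₂ + (1 + η) / (a * η)
      have hq : t₂ ≤ q := by simp only [q]; linarith [show 0 < (1 + η) / (a * η) by positivity]
      have h2 := linear_growth (fun t ht ↦ h.dw t (Icc_sub ht₂ ht)) (c := a * η)
        (fun t ht ↦ ?_) hq
      · have h3 : a * η * (q - t₂) = 1 + η := by simp only [q]; field_simp; ring
        linarith [hcon q hq, h.w0 t₂ ht₂]
      · have h3 := hcon t ht.1
        have h4 := Xmono t₂ t ht₂ ht.1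
        gcongr
        linarith
    obtain ⟨t₃, ht₃, hw3⟩ := hw3
    set q := t₃ + (k t₃ + 1) / η
    have hk3 := kpos t₃ (by linarith)
    have hq : t₃ ≤ q := by simp only [q]; linarith [show 0 < (k t₃ + 1) / η by positivity]
    have h2 := linear_growth (fun t ht ↦ (h.dk t (Icc_sub (by linarith) ht)).neg) (c := η)
      (fun t ht ↦ ?_) hq
    · have h3 : η * (q - t₃) = k t₃ + 1 := by simp only [q]; field_simp; ring
      have := hk q (by linarith)
      simp only [Pi.neg_apply] at h2
      linarith
    · have h4 : w t₃ ≤ w t := by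
        rcases ht.1.lt_or_eq with h | h
        · exact (wmono t₃ t (by linarith) h).le
        · rw [h]
      have h5 := hk t (by linarith [ht.1])
      nlinarith [mul_nonneg l0 h5]
  have Xlarge : ∀ η, 0 < η → ∃ t, 0 ≤ t ∧ 1 - η < X t := by
    intro η hη
    by_contra! hcon
    obtain ⟨t, ht, hkt⟩ := ksmall (min 1 (η / (l + 1))) (by positivity)
    obtain ⟨h1, h2⟩ := lt_min_iff.1 hkt
    rw [lt_div_iff₀ (by positivity)] at h2
    have h3 := h.dk_nonpos (t := t) ht (hj t ht)
    have h4 := hwX t ht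
    have h5 := hcon t ht
    have h6 := hk t ht
    nlinarith
  -- the quadratic form `(1 - ε) - (l + ε) s + (2 - 3 ε) s²` is positive for small `ε`, its
  -- discriminant at `ε = 0` being `l² - 8`
  obtain ⟨ε, hε, hε1, hdisc⟩ : ∃ ε : ℝ, 0 < ε ∧ ε < 1 / 2 ∧
      0 < 4 * (1 - ε) * (2 - 3 * ε) - (l + ε) ^ 2 := by
    have hcont : Continuous fun ε : ℝ ↦ 4 * (1 - ε) * (2 - 3 * ε) - (l + ε) ^ 2 := by fun_prop
    have h1 : ∀ᶠ ε in nhds (0 : ℝ), 0 < 4 * (1 - ε) * (2 - 3 * ε) - (l + ε) ^ 2 :=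
      hcont.continuousAt.eventually (lt_mem_nhds (by simp; linarith))
    have h2 : ∀ᶠ ε in nhdsWithin (0 : ℝ) (Ioi 0), 0 < 4 * (1 - ε) * (2 - 3 * ε) - (l + ε) ^ 2 :=
      h1.filter_mono nhdsWithin_le_nhds
    obtain ⟨ε, h3, h4⟩ := (h2.and (Ioo_mem_nhdsGT (show (0 : ℝ) < 1 / 2 by norm_num))).exists
    exact ⟨ε, h4.1, h4.2, h3⟩
  obtain ⟨t₃, ht₃, hk3⟩ := ksmall ε hε
  obtain ⟨t₄, ht₄, hX4⟩ := Xlarge ε hε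
  set p := max t₃ t₄
  have hp0 : 0 ≤ p := ht₃.trans (le_max_left _ _)
  have hpq : p ≤ p + 4 / ε := by linarith [show 0 < 4 / ε by positivity]
  -- `arctan (k / (1 - X))` grows at a rate at least `ε` for a time `4 / ε`, but its range has
  -- length `π < 4`
  have h1 := linear_growth (f := fun t ↦ Real.arctan (k t / (1 - X t))) (c := ε)
    (fun t ht ↦ ((h.dk t (Icc_sub hp0 ht)).div ((h.dX t (Icc_sub hp0 ht)).const_sub 1)
      (by linarith [hX1 t (hp0.trans ht.1)])).arctan) (fun t ht ↦ ?_) hpq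
  · have h2 : ε * (p + 4 / ε - p) = 4 := by field_simp; ring
    have h3 := Real.neg_pi_div_two_lt_arctan (k p / (1 - X p))
    have h4 := Real.arctan_lt_pi_div_two (k (p + 4 / ε) / (1 - X (p + 4 / ε)))
    linarith [Real.pi_lt_four]
  · have ht0 := hp0.trans ht.1
    have hX := hX1 t ht0
    have hkε : k t < ε := (anti t₃ t ht₃ ((le_max_left _ _).trans ht.1)).trans_lt hk3
    have hXε : 1 - ε < X t := hX4.trans_le (Xmono t₄ t ht₄ ((le_max_right _ _).trans ht.1))
    have hkt := hk t ht0
    have hw := hwX t ht0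
    have hXp := h.X0 t ht0
    obtain ⟨y, hy⟩ : ∃ y, y = 1 - X t := ⟨_, rfl⟩
    have hy0 : 0 < y := by linarith
    obtain ⟨s, hs⟩ : ∃ s, s = k t / (1 - X t) := ⟨_, rfl⟩
    have hs0 : 0 ≤ s := by rw [hs]; exact div_nonneg hkt (by linarith)
    have hks : k t = s * y := by rw [hs, hy, div_mul_cancel₀]; linarith
    change ε ≤ 1 / (1 + (k t / (1 - X t)) ^ 2) * _
    rw [← hs, mul_comm, ← div_eq_mul_one_div, le_div_iff₀ (by positivity), ← hy]
    have h5 : ε * (1 + s ^ 2) ≤ 1 - (l + k t) * s + 2 * X t * s ^ 2 := by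
      have h6 : (l + k t) * s ≤ (l + ε) * s := by gcongr
      have h7 : 2 * (1 - ε) * s ^ 2 ≤ 2 * X t * s ^ 2 := by gcongr
      have h8 : 0 ≤ 4 * (1 - ε) * ((1 - ε) - (l + ε) * s + (2 - 3 * ε) * s ^ 2) := by
        nlinarith [sq_nonneg (2 * (1 - ε) - (l + ε) * s), mul_nonneg hdisc.le (sq_nonneg s)]
      have h9 := nonneg_of_mul_nonneg_right h8 (by linarith)
      linarith
    refine h5.trans ?_
    rw [le_div_iff₀ (by positivity)]
    have h10 : 1 - X t - (l + k t) * k t ≤ 1 - l * k t - k t ^ 2 - (1 - 2 / 2) * X t - w t := by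
      linarith
    have h11 := mul_le_mul_of_nonneg_right h10 hy0.le
    rw [show 1 - X t = y from hy.symm] at h11
    have e : (1 - (l + k t) * s + 2 * X t * s ^ 2) * y ^ 2 =
      (y - (l + k t) * k t) * y - k t * -(2 * k t * X t) := by
      rw [show k t = s * y from hks]; ring
    rw [e]
    linarith

/-- An orbit staying bounded with `j ≥ 0` for all positive times must reach `k < 0`, provided that
`b < 2` or `l² < 8`. For `b < 2` the reason is `k' ≤ -(1 - b/2) X / 2`, where `X` does not decrease
while `k ≥ 0`. -/
theorem exists_k_neg (h : Orbit l a b (Ici 0) X k w)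
    (hj : ∀ t, 0 ≤ t → 0 ≤ jfun l b (X t) (k t) (w t)) (hz : 0 ≤ zfun a b (X 0) (k 0) (w 0))
    (hk0 : 0 < k 0) (hM : ∀ t, 0 ≤ t → X t ≤ M) (hc : 0 < 1 - b / 2 ∨ l ^ 2 < 8) :
    ∃ t, 0 ≤ t ∧ k t < 0 := by
  by_cases hb : 0 < 1 - b / 2
  · by_contra! hk
    have X00 : 0 < X 0 := h.X0 0 self_mem_Ici
    set c := (1 - b / 2) * X 0 / 2 with hcdef
    have hc0 : 0 < c := by positivity
    set q := (k 0 + 1) / c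
    have hq : 0 ≤ q := by positivity
    have h2 := linear_growth (fun t ht ↦ (h.dk t (Icc_sub le_rfl ht)).neg) (c := c)
      (fun t ht ↦ ?_) hq
    · have h3 : c * (q - 0) = k 0 + 1 := by simp only [q]; field_simp; ring
      have := hk q hq
      simp only [Pi.neg_apply] at h2
      linarith
    · have h3 : X 0 ≤ X t :=
        (h.mono (Icc_sub le_rfl)).X_mono (fun r hr ↦ hk r hr.1) ht.1
      have h4 := hj t ht.1
      have h5 : (1 - b / 2) * X 0 ≤ (1 - b / 2) * X t := by gcongr
      unfold jfun at h4
      linarith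
  · obtain rfl : b = 2 := by linarith [h.b2]
    exact h.exists_k_neg_two hj hz hk0 hM (by simpa using hc)

/-- Once `k < 0`, with `k` decreasing, `X` and `w` decay exponentially. -/
theorem tendsto_zero (h : Orbit l a b (Ici 0) X k w)
    (hj : ∀ t, 0 ≤ t → 0 ≤ jfun l b (X t) (k t) (w t)) {t₀ : ℝ} (ht₀ : 0 ≤ t₀) (hk : k t₀ < 0) :
    Tendsto X atTop (nhds 0) ∧ Tendsto w atTop (nhds 0) := by
  have a0 := h.a0
  have b0 := h.b0
  have anti : ∀ t, t₀ ≤ t → k t ≤ k t₀ := fun t hst ↦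
    (h.mono (Icc_sub ht₀)).k_anti (fun t ht ↦ hj t (ht₀.trans ht.1)) hst
  obtain ⟨m, hm0, hma, hmk⟩ : ∃ m, 0 < m ∧ m < a ∧ m ≤ -2 * k t₀ :=
    ⟨min (a / 2) (-2 * k t₀), lt_min (by linarith) (by linarith),
      (min_le_left _ _).trans_lt (by linarith), min_le_right _ _⟩
  set C := X t₀ * Real.exp (m * t₀) with hC
  have hC0 : 0 < C := mul_pos (h.X0 t₀ ht₀) (Real.exp_pos _)
  have hexp : ∀ c : ℝ, 0 < c → Tendsto (fun t : ℝ ↦ Real.exp (-c * t)) atTop (nhds 0) := by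
    intro c hc
    refine Real.tendsto_exp_atBot.comp ?_
    exact tendsto_id.const_mul_atTop_of_neg (by linarith)
  have hX : ∀ t, t₀ ≤ t → X t ≤ C * Real.exp (-m * t) := by
    intro t ht
    have h1 := mul_exp_le (f := fun t ↦ -X t) m (fun r hr ↦ (h.dX r (Icc_sub ht₀ hr)).neg)
      (fun r hr ↦ by
        have h1 := anti r hr.1
        have h2 := h.X0 r (ht₀.trans hr.1)
        nlinarith) ht
    have h2 : X t * Real.exp (m * t) ≤ C := by linarith
    rw [neg_mul, Real.exp_neg, ← div_eq_mul_inv, le_div_iff₀ (Real.exp_pos _)]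
    exact h2
  have hXt : Tendsto X atTop (nhds 0) := by
    refine tendsto_of_tendsto_of_tendsto_of_le_of_le' tendsto_const_nhds
      (by simpa using (hexp m hm0).const_mul C) ?_ ?_
    · filter_upwards [eventually_ge_atTop 0] with t ht using (h.X0 t ht).le
    · filter_upwards [eventually_ge_atTop t₀] with t ht using by simpa using hX t ht
  refine ⟨hXt, ?_⟩
  set C₁ := a * b / 2 * C / (a - m) with hC₁
  have hC₁' : (a - m) * C₁ = a * b / 2 * C := by
    rw [hC₁, mul_div_cancel₀]; linarith
  set D := C₁ * Real.exp (-m * t₀) - w t₀ with hD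
  have hw : ∀ t, t₀ ≤ t → w t ≤ C₁ * Real.exp (-m * t) - D * Real.exp (a * t₀) *
      Real.exp (-a * t) := by
    intro t ht
    have h1 := mul_exp_le (f := fun t ↦ C₁ * Real.exp (-m * t) - w t) a
      (fun r hr ↦ (((hasDerivAt_id r).const_mul (-m)).exp.const_mul C₁).sub
        (h.dw r (Icc_sub ht₀ hr)))
      (fun r hr ↦ by
        have h1 := hX r hr.1
        have h2 : a * b / 2 * X r ≤ a * b / 2 * (C * Real.exp (-m * r)) := by gcongr
        have h3 : (a - m) * C₁ * Real.exp (-m * r) = a * b / 2 * C * Real.exp (-m * r) := by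
          rw [hC₁']
        simp only [id]
        linarith) ht
    have h2 : D * Real.exp (a * t₀) * Real.exp (-a * t) ≤ C₁ * Real.exp (-m * t) - w t := by
      rw [neg_mul a, Real.exp_neg, ← div_eq_mul_inv, div_le_iff₀ (Real.exp_pos _)]
      exact h1
    linarith
  refine tendsto_of_tendsto_of_tendsto_of_le_of_le' tendsto_const_nhds
      (by simpa using ((hexp m hm0).const_mul C₁).sub ((hexp a a0).const_mul (D * Real.exp (a * t₀))))
      ?_ ?_
  · filter_upwards [eventually_ge_atTop 0] with t ht using (h.w0 t ht).le
  · filter_upwards [eventually_ge_atTop t₀] with t ht using by simpa using hw t ht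

/-- As `X, w → 0`, the inequality `-l/2 ≤ k < 0` would eventually make `k'` positive. -/
theorem exists_k_lt (h : Orbit l a b (Ici 0) X k w)
    (hj : ∀ t, 0 ≤ t → 0 ≤ jfun l b (X t) (k t) (w t)) {t₀ : ℝ} (ht₀ : 0 ≤ t₀) (hk : k t₀ < 0) :
    ∃ t, 0 ≤ t ∧ k t < -(l / 2) := by
  by_contra! hcon
  obtain ⟨h1, h2⟩ := h.tendsto_zero hj ht₀ hk
  have h3 : Tendsto (fun t ↦ (1 - b / 2) * X t + w t) atTop (nhds 0) := by
    simpa using (h1.const_mul (1 - b / 2)).add h2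
  obtain ⟨t, ht1, ht2⟩ := ((h3.eventually (gt_mem_nhds zero_lt_one)).and
    (eventually_ge_atTop t₀)).exists
  have h4 : k t ≤ k t₀ :=
    (h.mono (Icc_sub ht₀)).k_anti (fun t ht ↦ hj t (ht₀.trans ht.1)) ht2
  have ht := ht₀.trans ht2
  have h5 := hcon t ht
  have h6 := h.dk_nonpos (t := t) ht (hj t ht)
  nlinarith [h.l0]

/-- Here `X j ≥ X(0) w(0) / 2 > 0`, whereas `X j → 0` if `k` stays in `[-1, 0)`. -/
theorem exists_k_lt_of_zero (h : Orbit 0 a b (Ici 0) X k w)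
    (hs : Start 0 a b (X 0) (k 0) (w 0)) {t₀ : ℝ} (ht₀ : 0 ≤ t₀)
    (hk : k t₀ < 0) : ∃ t, 0 ≤ t ∧ k t < -1 := by
  by_contra! hcon
  have hj : ∀ t, 0 ≤ t → 0 ≤ jfun 0 b (X t) (k t) (w t) := fun t ht ↦
    ((h.mono (Icc_sub le_rfl)).j_pos_of_zero hs t ⟨ht, le_rfl⟩).le
  obtain ⟨h1, h2⟩ := h.tendsto_zero hj ht₀ hk
  have h3 : Tendsto (fun t ↦ X t * (w t + (1 - b / 2) * X t / 2)) atTop (nhds 0) := by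
    simpa using h1.mul (h2.add ((h1.const_mul (1 - b / 2)).div_const 2))
  have h0 : 0 < X 0 * w 0 / 2 := by
    have := mul_pos hs.x0 hs.ω0
    positivity
  obtain ⟨t, ht1, ht2⟩ := ((h3.eventually (gt_mem_nhds h0)).and
    (eventually_ge_atTop t₀)).exists
  have ht := ht₀.trans ht2
  have h4 : k t ≤ k t₀ :=
    (h.mono (Icc_sub ht₀)).k_anti (fun t ht ↦ hj t (ht₀.trans ht.1)) ht2
  have h5 := (h.mono (Icc_sub le_rfl)).J_lower hs t ⟨ht, le_rfl⟩
  have h6 := hcon t ht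
  have h7 : X t * jfun 0 b (X t) (k t) (w t) ≤ X t * (w t + (1 - b / 2) * X t / 2) := by
    have := h.X0 t ht
    unfold jfun
    gcongr
    nlinarith
  linarith

end Orbit

/-! ### The truncated flow -/

/-- The vector field in the coordinates `(X, k, w, l, a, b)`: the parameters are carried along as
constant coordinates, so that dependence on parameters is dependence on initial values. -/
noncomputable def field (y : Fin 6 → ℝ) : Fin 6 → ℝ :=
  ![2 * y 1 * y 0, 1 - y 3 * y 1 - y 1 ^ 2 - (1 - y 5 / 2) * y 0 - y 2,
    y 4 * (y 5 / 2 * y 0 - y 2), 0, 0, 0]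

/-- Coordinatewise truncation to `[-M, M]`. -/
noncomputable def clampVec (M : ℝ) (y : Fin 6 → ℝ) : Fin 6 → ℝ := fun i ↦ max (-M) (min (y i) M)

theorem clampVec_eq {M : ℝ} {y : Fin 6 → ℝ} (h : ‖y‖ ≤ M) : clampVec M y = y := by
  funext i
  have h1 := abs_le.1 ((norm_le_pi_norm y i).trans h)
  simp only [clampVec]
  rw [min_eq_left h1.2, max_eq_right h1.1]

theorem norm_clampVec {M : ℝ} (hM : 0 ≤ M) (y : Fin 6 → ℝ) : ‖clampVec M y‖ ≤ M := by
  rw [pi_norm_le_iff_of_nonneg hM]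
  intro i
  rw [Real.norm_eq_abs, abs_le]
  exact ⟨le_max_left _ _, max_le (by linarith) (min_le_right _ _)⟩

theorem lipschitz_clampVec (M : ℝ) : LipschitzWith 1 (clampVec M) := by
  refine LipschitzWith.of_dist_le_mul fun y z ↦ ?_
  rw [NNReal.coe_one, one_mul, dist_pi_le_iff dist_nonneg]
  intro i
  refine le_trans ?_ (dist_le_pi_dist y z i)
  have h1 : LipschitzWith 1 (fun x : ℝ ↦ max (-M) (min x M)) :=
    (LipschitzWith.id.min_const M).const_max (-M)
  simpa [clampVec] using h1.dist_le_mul (y i) (z i)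

theorem contDiff_field : ContDiff ℝ 1 field := by
  rw [contDiff_pi]
  intro i
  fin_cases i <;> simp [field] <;> fun_prop

/-- `φ` is the flow of the truncated vector field `field ∘ clampVec M`. -/
structure CutFlow (M : ℝ) (φ : (Fin 6 → ℝ) → ℝ → Fin 6 → ℝ) : Prop where
  zero : ∀ y, φ y 0 = y
  deriv : ∀ y t, HasDerivAt (φ y) (field (clampVec M (φ y t))) t
  cont : Continuous fun p : (Fin 6 → ℝ) × ℝ ↦ φ p.1 p.2
  add : ∀ y s t, φ y (s + t) = φ (φ y s) t

theorem exists_cutFlow {M : ℝ} (hM : 0 ≤ M) : ∃ φ, CutFlow M φ := by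
  have hcpt : IsCompact (Metric.closedBall (0 : Fin 6 → ℝ) M) := isCompact_closedBall _ _
  have hmem : ∀ y, clampVec M y ∈ Metric.closedBall (0 : Fin 6 → ℝ) M := fun y ↦ by
    simpa using norm_clampVec hM y
  obtain ⟨K, hK⟩ := (contDiff_field.contDiffOn (s := Metric.closedBall 0 M)).exists_lipschitzOnWith
    one_ne_zero (convex_closedBall _ _) hcpt
  obtain ⟨L, hL⟩ := hcpt.exists_bound_of_continuousOn contDiff_field.continuous.continuousOn
  have hF : LipschitzWith (K * 1) (fun y ↦ field (clampVec M y)) := by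
    rw [← lipschitzOnWith_univ]
    exact hK.comp (lipschitz_clampVec M).lipschitzOnWith fun y _ ↦ hmem y
  obtain ⟨φ, h1, h2, h3, h4⟩ := exists_flow (L := L.toNNReal) hF
    fun y ↦ (hL _ (hmem y)).trans (Real.le_coe_toNNReal L)
  exact ⟨φ, h1, h2, h3, h4⟩

/-- Admissible values of the parameters `l`, `a`, `b`. -/
structure Adm (l a b : ℝ) : Prop where
  l0 : 0 ≤ l
  a0 : 0 < a
  b0 : 0 < b
  b2 : b ≤ 2

/-- The sign of `X` is preserved, in both time directions. -/
theorem X_pos_of_deriv {X k : ℝ → ℝ} {p q : ℝ} (hk : Continuous k) (hpq : p ≤ q)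
    (hX : ∀ t ∈ Icc p q, HasDerivAt X (2 * k t * X t) t) : 0 < X p ↔ 0 < X q := by
  have h_prim : ∀ t, HasDerivAt (fun t ↦ ∫ s in (0 : ℝ)..t, k s) (k t) t := fun t ↦
    intervalIntegral.integral_hasDerivAt_right (hk.intervalIntegrable _ _)
      (hk.stronglyMeasurableAtFilter _ _) hk.continuousAt
  have hd : ∀ t ∈ Icc p q,
      HasDerivAt (fun t ↦ X t * Real.exp (-2 * ∫ s in (0 : ℝ)..t, k s)) 0 t := by
    intro t ht
    exact ((hX t ht).mul ((h_prim t).const_mul (-2)).exp).congr_deriv (by ring)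
  have h1 := le_of_deriv_nonneg hd (fun _ _ ↦ le_rfl) hpq
  have h2 := le_of_deriv_nonneg (fun t ht ↦ (hd t ht).neg) (fun _ _ ↦ by simp) hpq
  simp only [Pi.neg_apply, neg_le_neg_iff] at h2
  have h3 := le_antisymm h1 h2
  constructor <;> intro h
  · exact pos_of_mul_pos_left (h3 ▸ mul_pos h (Real.exp_pos _)) (Real.exp_pos _).le
  · exact pos_of_mul_pos_left (h3.symm ▸ mul_pos h (Real.exp_pos _)) (Real.exp_pos _).le

namespace CutFlow

variable {M : ℝ} {φ : (Fin 6 → ℝ) → ℝ → Fin 6 → ℝ} {y : Fin 6 → ℝ}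

theorem cont_coord (h : CutFlow M φ) (y : Fin 6 → ℝ) (i : Fin 6) : Continuous fun t ↦ φ y t i :=
  continuous_pi_iff.1 (h.cont.comp (by fun_prop : Continuous fun t : ℝ ↦ (y, t))) i

theorem deriv_coord (h : CutFlow M φ) {t : ℝ} (ht : ‖φ y t‖ ≤ M) (i : Fin 6) :
    HasDerivAt (fun t ↦ φ y t i) (field (φ y t) i) t := by
  have := hasDerivAt_pi.1 (h.deriv y t) i
  rwa [clampVec_eq ht] at this

theorem param (h : CutFlow M φ) (t : ℝ) :
    φ y t 3 = y 3 ∧ φ y t 4 = y 4 ∧ φ y t 5 = y 5 := by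
  have key : ∀ i, (∀ z, field z i = 0) → φ y t i = y i := by
    intro i hi
    have hd : ∀ t, HasDerivAt (fun t ↦ φ y t i) 0 t := fun t ↦ by
      have := hasDerivAt_pi.1 (h.deriv y t) i
      rwa [hi] at this
    have := is_const_of_deriv_eq_zero (fun t ↦ (hd t).differentiableAt) (fun t ↦ (hd t).deriv) t 0
    simpa [h.zero] using this
  exact ⟨key 3 fun _ ↦ rfl, key 4 fun _ ↦ rfl, key 5 fun _ ↦ rfl⟩

theorem dX (h : CutFlow M φ) {t : ℝ} (ht : ‖φ y t‖ ≤ M) :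
    HasDerivAt (fun t ↦ φ y t 0) (2 * φ y t 1 * φ y t 0) t := h.deriv_coord ht 0

theorem dk (h : CutFlow M φ) {t : ℝ} (ht : ‖φ y t‖ ≤ M) :
    HasDerivAt (fun t ↦ φ y t 1)
      (1 - y 3 * φ y t 1 - φ y t 1 ^ 2 - (1 - y 5 / 2) * φ y t 0 - φ y t 2) t := by
  obtain ⟨h3, h4, h5⟩ := h.param (y := y) t
  rw [← h3, ← h5]
  exact h.deriv_coord ht 1

theorem dw (h : CutFlow M φ) {t : ℝ} (ht : ‖φ y t‖ ≤ M) :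
    HasDerivAt (fun t ↦ φ y t 2) (y 4 * (y 5 / 2 * φ y t 0 - φ y t 2)) t := by
  obtain ⟨h3, h4, h5⟩ := h.param (y := y) t
  rw [← h4, ← h5]
  exact h.deriv_coord ht 2

/-- Inside the truncation box, the truncated flow follows true orbits. -/
theorem orbit (h : CutFlow M φ) (hadm : Adm (y 3) (y 4) (y 5)) (hX : 0 < y 0) (hw : 0 < y 2)
    {I : Set ℝ} (hI0 : ∀ t ∈ I, 0 ≤ t) (hI : ∀ t ∈ I, Icc 0 t ⊆ I) (hbox : ∀ t ∈ I, ‖φ y t‖ ≤ M) :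
    Orbit (y 3) (y 4) (y 5) I (fun t ↦ φ y t 0) (fun t ↦ φ y t 1) (fun t ↦ φ y t 2) := by
  have hXpos : ∀ t ∈ I, 0 < φ y t 0 := by
    intro t ht
    have := X_pos_of_deriv (h.cont_coord y 1) (hI0 t ht) fun s hs ↦ h.dX (hbox s (hI t ht hs))
    rw [h.zero] at this
    exact this.1 hX
  refine ⟨hadm.l0, hadm.a0, hadm.b0, hadm.b2, fun t ht ↦ h.dX (hbox t ht),
    fun t ht ↦ h.dk (hbox t ht), fun t ht ↦ h.dw (hbox t ht), hXpos, fun t ht ↦ ?_⟩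
  refine pos_of_mul_exp (f := fun t ↦ φ y t 2) (y 4) (fun s hs ↦ h.dw (hbox s (hI t ht hs)))
    (fun s hs ↦ ?_) (hI0 t ht) (by simpa [h.zero] using hw)
  have h1 := hXpos s (hI t ht hs)
  have h2 := hadm.a0
  have h3 := hadm.b0
  have : 0 < y 4 * (y 5 / 2 * φ y s 0) := by positivity
  linarith

theorem orbit_Icc (h : CutFlow M φ) (hadm : Adm (y 3) (y 4) (y 5)) (hX : 0 < y 0) (hw : 0 < y 2)
    {T : ℝ} (hbox : ∀ t ∈ Icc 0 T, ‖φ y t‖ ≤ M) :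
    Orbit (y 3) (y 4) (y 5) (Icc 0 T) (fun t ↦ φ y t 0) (fun t ↦ φ y t 1) (fun t ↦ φ y t 2) :=
  h.orbit hadm hX hw (fun _ ht ↦ ht.1) (fun _ ht ↦ Icc_subset_Icc_right ht.2) hbox

theorem orbit_Ici (h : CutFlow M φ) (hadm : Adm (y 3) (y 4) (y 5)) (hX : 0 < y 0) (hw : 0 < y 2)
    (hbox : ∀ t, 0 ≤ t → ‖φ y t‖ ≤ M) :
    Orbit (y 3) (y 4) (y 5) (Ici 0) (fun t ↦ φ y t 0) (fun t ↦ φ y t 1) (fun t ↦ φ y t 2) :=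
  h.orbit hadm hX hw (fun _ ht ↦ ht) (fun _ _ _ hs ↦ hs.1) hbox

end CutFlow

/-! ### Shooting -/

/-- `jfun` on the extended phase space. -/
noncomputable def jvec (y : Fin 6 → ℝ) : ℝ := jfun (y 3) (y 5) (y 0) (y 1) (y 2)

@[fun_prop]
theorem continuous_jvec : Continuous jvec := by
  unfold jvec jfun
  fun_prop

/-- The closed region in which orbits are followed. -/
def regC (M : ℝ) : Set (Fin 6 → ℝ) := {y | ‖y‖ ≤ M ∧ 0 ≤ jvec y ∧ -(y 3 + 2) ≤ y 1}

/-- The strict version of `regC`. -/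
def regU (M : ℝ) : Set (Fin 6 → ℝ) := {y | ‖y‖ < M ∧ 0 < jvec y ∧ -(y 3 + 2) < y 1}

theorem isClosed_regC (M : ℝ) : IsClosed (regC M) := by
  have h1 : IsClosed {y : Fin 6 → ℝ | ‖y‖ ≤ M} := isClosed_le (by fun_prop) (by fun_prop)
  have h2 : IsClosed {y : Fin 6 → ℝ | 0 ≤ jvec y} := isClosed_le (by fun_prop) (by fun_prop)
  have h3 : IsClosed {y : Fin 6 → ℝ | -(y 3 + 2) ≤ y 1} :=
    isClosed_le (by fun_prop) (by fun_prop)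
  exact h1.inter (h2.inter h3)

theorem isOpen_regU (M : ℝ) : IsOpen (regU M) := by
  have h1 : IsOpen {y : Fin 6 → ℝ | ‖y‖ < M} := isOpen_lt (by fun_prop) (by fun_prop)
  have h2 : IsOpen {y : Fin 6 → ℝ | 0 < jvec y} := isOpen_lt (by fun_prop) (by fun_prop)
  have h3 : IsOpen {y : Fin 6 → ℝ | -(y 3 + 2) < y 1} := isOpen_lt (by fun_prop) (by fun_prop)
  exact h1.inter (h2.inter h3)

theorem regU_subset (M : ℝ) : regU M ⊆ regC M := fun _ h ↦ ⟨h.1.le, h.2.1.le, h.2.2.le⟩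

/-- The initial values whose orbit crosses `k = -(l + 1)` while remaining in `regU`. -/
def crossing (M : ℝ) (φ : (Fin 6 → ℝ) → ℝ → Fin 6 → ℝ) : Set (Fin 6 → ℝ) :=
  {y | ∃ T, 0 ≤ T ∧ φ y T 1 < -(y 3 + 1) ∧ ∀ t ∈ Icc 0 T, φ y t ∈ regU M}

/-- Initial values for the shooting argument: admissible parameters, starting values as in `Start`
and a truncation level `M` beyond the a priori bounds. -/
structure ShootStart (M : ℝ) (y : Fin 6 → ℝ) : Prop where
  adm : Adm (y 3) (y 4) (y 5)
  start : Start (y 3) (y 4) (y 5) (y 0) (y 1) (y 2)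
  bnd_lt : Orbit.bnd (y 3) (y 4) (y 5) < M
  l_lt : y 3 + 3 < M
  a_lt : y 4 < M
  b_lt : y 5 < M

namespace CutFlow

variable {M : ℝ} {φ : (Fin 6 → ℝ) → ℝ → Fin 6 → ℝ} {y : Fin 6 → ℝ}

theorem isOpen_crossing (h : CutFlow M φ) : IsOpen (crossing M φ) := by
  rw [isOpen_iff_mem_nhds]
  rintro y ⟨T, hT, hk, hU⟩
  have h1 : ∀ᶠ z in nhds y, φ z T 1 < -(z 3 + 1) := by
    have hc : Continuous fun z ↦ φ z T 1 :=
      continuous_pi_iff.1 (h.cont.comp (by fun_prop : Continuous fun z : Fin 6 → ℝ ↦ (z, T))) 1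
    exact (isOpen_lt hc (by fun_prop)).mem_nhds hk
  have h2 : ∀ᶠ z in nhds y, ∀ t ∈ Icc 0 T, φ z t ∈ regU M := by
    refine isCompact_Icc.eventually_forall_of_forall_eventually fun t ht ↦ ?_
    exact h.cont.continuousAt.eventually ((isOpen_regU M).mem_nhds (hU t ht))
  filter_upwards [h1, h2] with z hz1 hz2
  exact ⟨T, hT, hz1, hz2⟩

theorem norm_lt (h : CutFlow M φ) (hy : ShootStart M y) {T : ℝ} (hT : ∀ t ∈ Icc 0 T, φ y t ∈ regC M) :
    ∀ t ∈ Icc 0 T, ‖φ y t‖ < M := by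
  intro t ht
  have ho := h.orbit_Icc hy.adm hy.start.x0 hy.start.ω0 fun t ht ↦ (hT t ht).1
  have hj : ∀ t ∈ Icc 0 T, 0 ≤ jfun (y 3) (y 5) (φ y t 0) (φ y t 1) (φ y t 2) := by
    intro t ht
    have := (hT t ht).2.1
    obtain ⟨h3, h4, h5⟩ := h.param (y := y) t
    rwa [jvec, h3, h5] at this
  have hk : ∀ t ∈ Icc 0 T, -(y 3 + 2) ≤ φ y t 1 ∧ φ y t 1 ≤ 1 := by
    intro t ht
    have h1 := (hT t ht).2.2
    rw [(h.param t).1] at h1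
    refine ⟨h1, ?_⟩
    have hs : Icc 0 t ⊆ Icc 0 T := Icc_subset_Icc_right ht.2
    have h2 := (ho.mono hs).k_anti (fun r hr ↦ hj r (hs hr)) ht.1
    simp only [h.zero] at h2
    exact h2.trans (hy.start.κ_le hy.adm.l0)
  have hX1 : y 0 ≤ 1 := by linarith [hy.start.x1]
  have hw1 : y 2 ≤ 1 := by nlinarith [hy.start.ω_lt hy.adm.a0, hy.start.x0, hy.adm.b2]
  have hb := ho.bounds hk (by simpa [h.zero] using hX1) (by simpa [h.zero] using hw1) t ht
  have hX := ho.X0 t ht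
  have hw := ho.w0 t ht
  have hM : 0 < M := by linarith [hb.1, hy.bnd_lt]
  obtain ⟨h3, h4, h5⟩ := h.param (y := y) t
  rw [pi_norm_lt_iff hM]
  intro i
  rw [Real.norm_eq_abs, abs_lt]
  have := hy.bnd_lt
  have := hy.l_lt
  have := hy.a_lt
  have := hy.b_lt
  have := hy.adm.l0
  have := hy.adm.a0
  have := hy.adm.b0
  have := hk t ht
  fin_cases i <;> simp [h3, h4, h5] <;> constructor <;> linarith

theorem j_nonneg (h : CutFlow M φ) {t : ℝ} (ht : φ y t ∈ regC M) :
    0 ≤ jfun (y 3) (y 5) (φ y t 0) (φ y t 1) (φ y t 2) := by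
  have := ht.2.1
  obtain ⟨h3, h4, h5⟩ := h.param (y := y) t
  rwa [jvec, h3, h5] at this

theorem orbit_start (h : CutFlow M φ) (hy : ShootStart M y) :
    Start (y 3) (y 4) (y 5) (φ y 0 0) (φ y 0 1) (φ y 0 2) := by
  simpa [h.zero] using hy.start

/-- Reaching `k = -(l+1)` within the closed region implies crossing it within the open one. -/
theorem reach (h : CutFlow M φ) (hy : ShootStart M y) {T : ℝ} (hT0 : 0 ≤ T)
    (hT : ∀ t ∈ Icc 0 T, φ y t ∈ regC M) (hk : φ y T 1 ≤ -(y 3 + 1)) : y ∈ crossing M φ := by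
  have l0 := hy.adm.l0
  obtain ⟨τ, hτ, hkτ⟩ : ∃ τ ∈ Icc 0 T, φ y τ 1 = -(y 3 + 1) := by
    have := intermediate_value_Icc' hT0 (h.cont_coord y 1).continuousOn
    refine this ⟨hk, ?_⟩
    rw [h.zero]
    linarith [hy.start.κ0]
  have hs : Icc 0 τ ⊆ Icc 0 T := Icc_subset_Icc_right hτ.2
  have hT' : ∀ t ∈ Icc 0 τ, φ y t ∈ regC M := fun t ht ↦ hT t (hs ht)
  have ho := h.orbit_Icc hy.adm hy.start.x0 hy.start.ω0 fun t ht ↦ (hT' t ht).1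
  have hnorm := h.norm_lt hy hT'
  have hst := h.orbit_start hy
  have hττ : τ ∈ Icc 0 τ := ⟨hτ.1, le_rfl⟩
  have hcX : 0 ≤ (1 - y 5 / 2) * φ y τ 0 := mul_nonneg ho.c_nonneg (ho.X0 τ hττ).le
  have hwτ := ho.w0 τ hττ
  have hj := ho.j_pos (fun t ht ↦ h.j_nonneg (hT' t ht)) hst.z.ge (hst.j_pos hy.adm.b2) (by
    simp only [hkτ, jfun]
    nlinarith)
  have hU : ∀ t ∈ Icc 0 τ, φ y t ∈ regU M := by
    intro t ht
    refine ⟨hnorm t ht, ?_, ?_⟩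
    · obtain ⟨h3, h4, h5⟩ := h.param (y := y) t
      rw [jvec, h3, h5]
      exact hj t ht
    · have hs : Icc t τ ⊆ Icc 0 τ := Icc_subset_Icc_left ht.1
      have h2 := (ho.mono hs).k_anti (fun r hr ↦ h.j_nonneg (hT' r (hs hr))) ht.2
      simp only [hkτ] at h2
      rw [(h.param t).1]
      linarith
  -- past `τ` the orbit stays in the open region for a while, with `k` strictly smaller
  have h1 : ∀ᶠ r in nhdsWithin τ (Ioi τ), φ y r 1 < φ y τ 1 := by
    refine eventually_lt_of_deriv_neg (ho.dk τ hττ) ?_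
    have := hj τ hττ
    simp only [jfun] at this
    linarith
  have h2 : ∀ᶠ r in nhds τ, φ y r ∈ regU M :=
    (h.deriv y τ).continuousAt.eventually ((isOpen_regU M).mem_nhds (hU τ hττ))
  obtain ⟨ε, hε, hball⟩ := Metric.eventually_nhds_iff.1 h2
  obtain ⟨r, hr1, hr2⟩ := (h1.and (Ioo_mem_nhdsGT (show τ < τ + ε by linarith))).exists
  refine ⟨r, hτ.1.trans hr2.1.le, by linarith, fun t ht ↦ ?_⟩
  rcases le_total t τ with h3 | h3
  · exact hU t ⟨ht.1, h3⟩
  · refine hball ?_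
    rw [Real.dist_eq, abs_lt]
    constructor <;> linarith [ht.2, hr2.2]

/-- Without damping `j` stays positive, so the orbit can leave the region only by crossing; if it never
leaves, `exists_k_lt_of_zero` makes it cross. -/
theorem crossing_of_zero (h : CutFlow M φ) (hy : ShootStart M y) (hl : y 3 = 0) : y ∈ crossing M φ := by
  by_contra hcon
  have hU : ∀ t, 0 ≤ t → φ y t ∈ regU M := by
    by_contra! hbad
    obtain ⟨t₀, ht₀, hbad⟩ := hbad
    set B : Set ℝ := {t | 0 ≤ t ∧ φ y t ∈ (regU M)ᶜ}
    have hcy : Continuous (φ y) := h.cont.comp (by fun_prop : Continuous fun t : ℝ ↦ (y, t))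
    have hBc : IsClosed B := isClosed_Ici.inter ((isOpen_regU M).isClosed_compl.preimage hcy)
    have hBb : BddBelow B := ⟨0, fun t ht ↦ ht.1⟩
    have hτ := hBc.csInf_mem ⟨t₀, ht₀, hbad⟩ hBb
    set τ := sInf B
    have hbefore : ∀ t, 0 ≤ t → t < τ → φ y t ∈ regU M := by
      intro t h0 ht
      by_contra h'
      exact absurd (csInf_le hBb (show t ∈ B from ⟨h0, h'⟩)) (not_le.2 ht)
    have hM : 0 < M := by linarith [hy.l_lt]
    have hτpos : 0 < τ := by
      rcases hτ.1.lt_or_eq with h' | h'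
      · exact h'
      · exfalso
        refine hτ.2 ?_
        rw [← h', h.zero]
        refine ⟨?_, hy.start.j_pos hy.adm.b2, by linarith [hy.start.κ0]⟩
        have h1 := hy.start.x0
        have h2 := hy.start.x1
        have h3 := hy.start.κ0
        have h4 := hy.start.κ_le hy.adm.l0
        have h5 := hy.start.ω0
        have h6 : y 2 ≤ 1 := by nlinarith [hy.start.ω_lt hy.adm.a0, hy.start.x0, hy.adm.b2]
        have := hy.l_lt
        have := hy.a_lt
        have := hy.b_lt
        have := hy.adm.l0
        have := hy.adm.a0
        have := hy.adm.b0
        rw [pi_norm_lt_iff hM]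
        intro i
        rw [Real.norm_eq_abs, abs_lt]
        fin_cases i <;> simp <;> constructor <;> linarith
    have hτC : φ y τ ∈ regC M := by
      refine (isClosed_regC M).mem_of_tendsto
        ((hcy.tendsto τ).mono_left (nhdsWithin_le_nhds (s := Iio τ))) ?_
      filter_upwards [Ioo_mem_nhdsLT hτpos] with t ht
      exact regU_subset M (hbefore t ht.1.le ht.2)
    have hC : ∀ t ∈ Icc 0 τ, φ y t ∈ regC M := by
      intro t ht
      rcases ht.2.lt_or_eq with h' | h'
      · exact regU_subset M (hbefore t ht.1 h')
      · rwa [h']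
    refine hτ.2 ⟨h.norm_lt hy hC τ ⟨hτ.1, le_rfl⟩, ?_, ?_⟩
    · have ho := h.orbit_Icc hy.adm hy.start.x0 hy.start.ω0 fun t ht ↦ (hC t ht).1
      have hst := h.orbit_start hy
      rw [hl] at ho hst
      have := ho.j_pos_of_zero hst τ ⟨hτ.1, le_rfl⟩
      obtain ⟨h3, h4, h5⟩ := h.param (y := y) τ
      rwa [jvec, h3, h5, hl]
    · by_contra h'
      refine hcon (h.reach hy hτ.1 hC ?_)
      rw [(h.param τ).1] at h'
      linarith
  have hC : ∀ t, 0 ≤ t → φ y t ∈ regC M := fun t ht ↦ regU_subset M (hU t ht)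
  have ho := h.orbit_Ici hy.adm hy.start.x0 hy.start.ω0 fun t ht ↦ (hC t ht).1
  have hst := h.orbit_start hy
  obtain ⟨t₀, ht₀, hk⟩ := ho.exists_k_neg (M := M) (fun t ht ↦ h.j_nonneg (hC t ht)) hst.z.ge hst.κ0
    (fun t ht ↦ (le_abs_self _).trans ((norm_le_pi_norm (φ y t) 0).trans (hC t ht).1))
    (Or.inr (by rw [hl]; norm_num))
  rw [hl] at ho hst
  obtain ⟨t, ht, hk⟩ := ho.exists_k_lt_of_zero hst ht₀ hk
  exact hcon (h.reach hy ht (fun r hr ↦ hC r hr.1) (by rw [hl]; linarith))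

theorem not_crossing (h : CutFlow M φ) (hy : ShootStart M y)
    (hl : 13 ≤ y 3 ^ 2 ∨ 15 / 2 ≤ y 3 ^ 2 ∧ (1 - y 5 / 2) * M ≤ 1 / 20) : y ∉ crossing M φ := by
  rintro ⟨T, hT, hk, hU⟩
  have ho := h.orbit_Icc hy.adm hy.start.x0 hy.start.ω0 fun t ht ↦ (hU t ht).1.le
  have := ho.no_crossing (h.orbit_start hy) (hl.imp_right fun h' ↦ ⟨h'.1, fun t ht ↦ ?_⟩) T
    ⟨hT, le_rfl⟩
  · linarith [hy.adm.l0]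
  · refine le_trans ?_ h'.2
    have := ho.c_nonneg
    gcongr
    exact (le_abs_self _).trans ((norm_le_pi_norm (φ y t) 0).trans (hU t ht).1.le)

/-- On the boundary of the set of crossing initial values, the orbit stays in the region for all
positive times, without reaching `k = -(l+1)`, and `k` becomes negative. -/
theorem boundary (h : CutFlow M φ) (hy : ShootStart M y) (hyn : y ∉ crossing M φ)
    {z : ℕ → Fin 6 → ℝ} (hz : Tendsto z atTop (nhds y)) (hzi : ∀ n, ShootStart M (z n))
    (hzc : ∀ n, z n ∈ crossing M φ) :
    (∀ t, 0 ≤ t → φ y t ∈ regC M ∧ -(y 3 + 1) ≤ φ y t 1) ∧ ∃ t, 0 ≤ t ∧ φ y t 1 < 0 := by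
  choose T hT0 hTk hTU using hzc
  have hlim : ∀ (σ : ℕ → ℕ) (r : ℕ → ℝ) (t : ℝ), Tendsto σ atTop atTop →
      Tendsto r atTop (nhds t) → Tendsto (fun n ↦ φ (z (σ n)) (r n)) atTop (nhds (φ y t)) :=
    fun σ r t hσ hr ↦ (h.cont.tendsto (y, t)).comp ((hz.comp hσ).prodMk_nhds hr)
  have hC : ∀ t, 0 ≤ t → φ y t ∈ regC M := by
    by_cases hb : ∃ R, ∃ᶠ n in atTop, T n ∈ Icc 0 R
    · exfalso
      obtain ⟨R, hR⟩ := hb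
      obtain ⟨τ, hτ, σ, hσ, hστ⟩ := isCompact_Icc.tendsto_subseq' hR
      have hlτ := hlim σ _ τ hσ.tendsto_atTop hστ
      refine hyn (h.reach hy hτ.1 (fun t ht ↦ ?_) ?_)
      · rcases ht.2.lt_or_eq with h' | h'
        · refine (isClosed_regC M).mem_of_tendsto
            (hlim σ (fun _ ↦ t) t hσ.tendsto_atTop tendsto_const_nhds) ?_
          filter_upwards [hστ.eventually (lt_mem_nhds h')] with n hn
          exact regU_subset M (hTU _ t ⟨ht.1, le_of_lt hn⟩)
        · rw [h']
          refine (isClosed_regC M).mem_of_tendsto hlτ (Eventually.of_forall fun n ↦ ?_)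
          exact regU_subset M (hTU _ _ ⟨hT0 _, le_rfl⟩)
      · have h1 : Tendsto (fun n ↦ φ (z (σ n)) (T (σ n)) 1) atTop (nhds (φ y τ 1)) :=
          (tendsto_pi_nhds.1 hlτ) 1
        have h2 : Tendsto (fun n ↦ -(z (σ n) 3 + 1)) atTop (nhds (-(y 3 + 1))) :=
          (((tendsto_pi_nhds.1 (hz.comp hσ.tendsto_atTop)) 3).add_const 1).neg
        exact le_of_tendsto_of_tendsto' h1 h2 fun n ↦ (hTk _).le
    · intro t ht
      refine (isClosed_regC M).mem_of_tendsto
        (hlim id (fun _ ↦ t) t tendsto_id tendsto_const_nhds) ?_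
      have h1 : ∀ᶠ n in atTop, ¬ T n ∈ Icc 0 t := by
        by_contra hcon
        exact hb ⟨t, hcon⟩
      filter_upwards [h1] with n hn
      refine regU_subset M (hTU _ t ⟨ht, ?_⟩)
      by_contra hlt
      exact hn ⟨hT0 n, (not_le.1 hlt).le⟩
  refine ⟨fun t ht ↦ ⟨hC t ht, ?_⟩, ?_⟩
  · by_contra hlt
    exact hyn (h.reach hy ht (fun r hr ↦ hC r hr.1) (not_le.1 hlt).le)
  · have ho := h.orbit_Ici hy.adm hy.start.x0 hy.start.ω0 fun t ht ↦ (hC t ht).1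
    have hst := h.orbit_start hy
    refine ho.exists_k_neg (M := M) (fun t ht ↦ h.j_nonneg (hC t ht)) hst.z.ge hst.κ0
      (fun t ht ↦ (le_abs_self _).trans ((norm_le_pi_norm (φ y t) 0).trans (hC t ht).1)) ?_
    -- for `b = 2` and `l² ≥ 8`, the nearby `z n` could not be crossing
    by_contra! hcon
    have hb : y 5 = 2 := by linarith [hy.adm.b2]
    have h1 : ∀ᶠ v in nhds y, 15 / 2 < v 3 ^ 2 ∧ (1 - v 5 / 2) * M < 1 / 20 := by
      have o1 : IsOpen {v : Fin 6 → ℝ | 15 / 2 < v 3 ^ 2} :=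
        isOpen_lt (by fun_prop) (by fun_prop)
      have o2 : IsOpen {v : Fin 6 → ℝ | (1 - v 5 / 2) * M < 1 / 20} :=
        isOpen_lt (by fun_prop) (by fun_prop)
      have e1 : ∀ᶠ v in nhds y, 15 / 2 < v 3 ^ 2 :=
        o1.mem_nhds (by simp only [mem_ofPred_eq]; linarith [hcon.2])
      have e2 : ∀ᶠ v in nhds y, (1 - v 5 / 2) * M < 1 / 20 := o2.mem_nhds (by simp [hb])
      exact e1.and e2
    obtain ⟨n, hn⟩ := (hz.eventually h1).exists
    exact h.not_crossing (hzi n) (Or.inr ⟨hn.1.le, hn.2.le⟩) ⟨T n, hT0 n, hTk n, hTU n⟩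

/-- Shooting along a path of initial values from `l = 0` to `l² ≥ 13`. -/
theorem shooting (h : CutFlow M φ) {Y : ℝ → Fin 6 → ℝ} {S : ℝ} (hS : 0 ≤ S)
    (hYc : ContinuousOn Y (Icc 0 S)) (hY : ∀ s ∈ Icc 0 S, ShootStart M (Y s)) (hY0 : Y 0 3 = 0)
    (hYS : 13 ≤ Y S 3 ^ 2) :
    ∃ s ∈ Icc 0 S, (∀ t, 0 ≤ t → φ (Y s) t ∈ regC M ∧ -(Y s 3 + 1) ≤ φ (Y s) t 1) ∧
      ∃ t, 0 ≤ t ∧ φ (Y s) t 1 < 0 := by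
  set B : Set ℝ := {s ∈ Icc 0 S | Y s ∈ (crossing M φ)ᶜ} with hB
  have hBc : IsClosed B :=
    hYc.preimage_isClosed_of_isClosed isClosed_Icc h.isOpen_crossing.isClosed_compl
  have hBb : BddBelow B := ⟨0, fun t ht ↦ ht.1.1⟩
  have hSS : S ∈ Icc 0 S := ⟨hS, le_rfl⟩
  have hτ := hBc.csInf_mem ⟨S, hSS, h.not_crossing (hY S hSS) (Or.inl hYS)⟩ hBb
  set τ := sInf B
  have hτpos : 0 < τ := by
    rcases hτ.1.1.lt_or_eq with h' | h'
    · exact h'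
    · exact absurd (h.crossing_of_zero (hY τ hτ.1) (by rw [← h', hY0])) hτ.2
  have hbefore : ∀ s, 0 ≤ s → s < τ → Y s ∈ crossing M φ := by
    intro s h0 hs
    by_contra h'
    exact absurd (csInf_le hBb (show s ∈ B from ⟨⟨h0, hs.le.trans hτ.1.2⟩, h'⟩)) (not_le.2 hs)
  obtain ⟨v, -, hv, hvτ⟩ := exists_seq_strictMono_tendsto' hτpos
  refine ⟨τ, hτ.1, h.boundary (hY τ hτ.1) hτ.2 (z := fun n ↦ Y (v n)) ?_ ?_ ?_⟩
  · refine (hYc τ hτ.1).tendsto.comp (tendsto_nhdsWithin_iff.2 ⟨hvτ, Eventually.of_forall fun n ↦ ?_⟩)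
    exact ⟨(hv n).1.le, (hv n).2.le.trans hτ.1.2⟩
  · exact fun n ↦ hY _ ⟨(hv n).1.le, (hv n).2.le.trans hτ.1.2⟩
  · exact fun n ↦ hbefore _ (hv n).1.le (hv n).2

end CutFlow

/-! ### From a bounded entire orbit to a homoclinic trajectory -/

namespace Orbit

variable {l a b : ℝ} {X k w : ℝ → ℝ} {M : ℝ}

theorem w_le (h : Orbit l a b univ X k w) {t : ℝ} (hz : 0 ≤ zfun a b (X t) (k t) (w t))
    (hk : 0 ≤ k t) : w t ≤ b / 2 * X t := by
  have h1 := mul_nonneg hk (h.w0 t trivial).le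
  unfold zfun at hz
  have h2 : 0 ≤ a * (b / 2 * X t - w t) := by linarith
  have := nonneg_of_mul_nonneg_right h2 h.a0
  linarith

theorem tendsto_atBot (h : Orbit l a b univ X k w)
    (hj : ∀ t, 0 ≤ jfun l b (X t) (k t) (w t)) (hz : ∀ t, 0 ≤ zfun a b (X t) (k t) (w t))
    (hk0 : 0 < k 0) : Tendsto X atBot (nhds 0) ∧ Tendsto w atBot (nhds 0) := by
  have anti : ∀ t ≤ 0, k 0 ≤ k t := fun t ht ↦
    (h.mono (subset_univ _)).k_anti (fun t _ ↦ hj t) ht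
  have hX : Tendsto X atBot (nhds 0) := by
    have hle : ∀ t ≤ 0, X t ≤ X 0 * Real.exp (2 * k 0 * t) := by
      intro t ht
      have := mul_exp_le (f := X) (-(2 * k 0)) (fun s (_ : s ∈ Icc t 0) ↦ h.dX s trivial)
        (fun s hs ↦ by nlinarith [h.X0 s trivial, anti s hs.2]) ht
      rw [mul_zero, Real.exp_zero, mul_one] at this
      have h2 := mul_le_mul_of_nonneg_right this (Real.exp_pos (2 * k 0 * t)).le
      rwa [mul_assoc, ← Real.exp_add, neg_mul, neg_add_cancel, Real.exp_zero, mul_one] at h2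
    have hlim : Tendsto (fun t ↦ X 0 * Real.exp (2 * k 0 * t)) atBot (nhds 0) := by
      have h1 : Tendsto (fun t ↦ 2 * k 0 * t) atBot atBot :=
        tendsto_id.const_mul_atBot (by linarith)
      simpa using (Real.tendsto_exp_atBot.comp h1).const_mul (X 0)
    refine tendsto_of_tendsto_of_tendsto_of_le_of_le' tendsto_const_nhds hlim
      (Eventually.of_forall fun t ↦ (h.X0 t trivial).le) ?_
    filter_upwards [eventually_le_atBot 0] with t ht using hle t ht
  refine ⟨hX, ?_⟩
  refine tendsto_of_tendsto_of_tendsto_of_le_of_le' tendsto_const_nhds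
    (by simpa using hX.const_mul (b / 2)) (Eventually.of_forall fun t ↦ (h.w0 t trivial).le) ?_
  filter_upwards [eventually_le_atBot 0] with t ht using h.w_le (hz t) (hk0.le.trans (anti t ht))

/-- Without damping there is no homoclinic orbit: the energy would be nondecreasing, with limit `0`
at both ends, hence constant. -/
theorem l_ne_zero (h : Orbit l a b univ X k w) (hM : ∀ t, |k t| ≤ M)
    (hz : ∀ t, 0 ≤ zfun a b (X t) (k t) (w t)) (hk0 : 0 < k 0)
    (hXt : Tendsto X atTop (nhds 0)) (hwt : Tendsto w atTop (nhds 0))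
    (hXb : Tendsto X atBot (nhds 0)) (hwb : Tendsto w atBot (nhds 0)) : l ≠ 0 := by
  rintro rfl
  have a0 := h.a0
  have b0 := h.b0
  have key : ∀ F : Filter ℝ, Tendsto X F (nhds 0) → Tendsto w F (nhds 0) →
      Tendsto (fun t ↦ X t * jfun 0 b (X t) (k t) (w t) - w t ^ 2 / b) F (nhds 0) := by
    intro F hX hw
    have h1 : Tendsto (fun t ↦ X t * (k t ^ 2)) F (nhds 0) := by
      refine squeeze_zero_norm (a := fun t ↦ X t * M ^ 2) (fun t ↦ ?_)
        (by simpa using hX.mul_const (M ^ 2))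
      rw [norm_mul, Real.norm_of_nonneg (h.X0 t trivial).le, norm_pow, Real.norm_eq_abs]
      have := h.X0 t trivial
      have := hM t
      gcongr
    have h2 := (h1.add (hX.mul ((hw.sub_const 1).add ((hX.const_mul (1 - b / 2)).div_const 2)))).sub
      ((hw.pow 2).div_const b)
    refine (h2.congr fun t ↦ ?_).trans (by simp)
    simp only [jfun]
    ring
  set E : ℝ → ℝ := fun t ↦ X t * jfun 0 b (X t) (k t) (w t) - w t ^ 2 / b with hE
  have hd : ∀ t, HasDerivAt E (2 * (a * (b / 2 * X t - w t)) ^ 2 / (a * b)) t :=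
    fun t ↦ h.hasDerivAt_energy trivial
  have hmono : Monotone E := fun s t hst ↦
    le_of_deriv_nonneg (fun r _ ↦ hd r) (fun r _ ↦ by positivity) hst
  have hconst : E = fun _ ↦ 0 := by
    funext t
    exact le_antisymm (hmono.ge_of_tendsto (key _ hXt hwt) t) (hmono.le_of_tendsto (key _ hXb hwb) t)
  have h0 := (hd 0).unique (hconst ▸ hasDerivAt_const (0 : ℝ) (0 : ℝ))
  have h1 : a * (b / 2 * X 0 - w 0) = 0 := by
    have : (2 * (a * (b / 2 * X 0 - w 0)) ^ 2 / (a * b)) = 0 := h0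
    rw [div_eq_zero_iff] at this
    rcases this with h' | h'
    · simpa using h'
    · exact absurd h' (by positivity)
  have h2 := hz 0
  have h3 := mul_pos hk0 (h.w0 0 trivial)
  unfold zfun at h2
  linarith

theorem isHomoclinic (h : Orbit l a b univ X k w) (hM : ∀ t, |k t| ≤ M)
    (hXt : Tendsto X atTop (nhds 0)) (hwt : Tendsto w atTop (nhds 0))
    (hXb : Tendsto X atBot (nhds 0)) (hwb : Tendsto w atBot (nhds 0)) :
    IsHomoclinicToOrigin l a b (fun t ↦ √(X t)) (fun t ↦ k t * √(X t))
      (fun t ↦ w t - b / 2 * X t) := by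
  have lim : ∀ F : Filter ℝ, Tendsto X F (nhds 0) → Tendsto w F (nhds 0) →
      Tendsto (fun t => ((√(X t), k t * √(X t), w t - b / 2 * X t) : ℝ × ℝ × ℝ)) F
        (nhds ((0 : ℝ), (0 : ℝ), (0 : ℝ))) := by
    intro F hX hw
    have h1 : Tendsto (fun t ↦ √(X t)) F (nhds 0) := by simpa using hX.sqrt
    have h2 : Tendsto (fun t ↦ k t * √(X t)) F (nhds 0) := by
      refine squeeze_zero_norm (a := fun t ↦ M * √(X t)) (fun t ↦ ?_)
        (by simpa using h1.const_mul M)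
      rw [norm_mul, Real.norm_of_nonneg (Real.sqrt_nonneg _), Real.norm_eq_abs]
      have := hM t
      gcongr
    have h3 : Tendsto (fun t ↦ w t - b / 2 * X t) F (nhds 0) := by
      simpa using hw.sub (hX.const_mul (b / 2))
    exact h1.prodMk_nhds (h2.prodMk_nhds h3)
  have dx : ∀ t, HasDerivAt (fun t ↦ √(X t)) (k t * √(X t)) t := by
    intro t
    have hX := h.X0 t trivial
    refine ((h.dX t trivial).sqrt hX.ne').congr_deriv ?_
    have h1 := Real.sq_sqrt hX.le
    have h2 := (Real.sqrt_pos.2 hX).ne'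
    field_simp
    rw [h1]
  refine ⟨fun t ↦ ⟨dx t, ?_, ?_⟩, ?_, lim _ hXt hwt, lim _ hXb hwb⟩
  · refine ((h.dk t trivial).mul (dx t)).congr_deriv ?_
    have h1 := Real.sq_sqrt (h.X0 t trivial).le
    have h3 : √(X t) ^ 3 = X t * √(X t) := by rw [pow_succ, h1]
    simp only [h3]
    ring
  · refine ((h.dw t trivial).sub ((h.dX t trivial).const_mul (b / 2))).congr_deriv ?_
    have h1 := Real.mul_self_sqrt (h.X0 t trivial).le
    linear_combination b * k t * h1
  · -- a constant solution with limit `0` would have `X = 0`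
    by_contra! hcon
    have h1 : Tendsto (fun t ↦ √(X t)) atTop (nhds 0) := by simpa using hXt.sqrt
    have h2 : (fun t ↦ √(X t)) = fun _ ↦ √(X 0) := by
      funext t
      exact congrArg Prod.fst (hcon t 0)
    rw [h2, tendsto_const_nhds_iff] at h1
    exact (Real.sqrt_pos.2 (h.X0 0 trivial)).ne' h1

end Orbit

/-! ### Passing to the limit of vanishing starting values -/

/-- The closed conditions inherited by limits of the shooting orbits. -/
def limC (M : ℝ) : Set (Fin 6 → ℝ) :=
  {y | y ∈ regC M ∧ 0 ≤ zfun (y 4) (y 5) (y 0) (y 1) (y 2) ∧ 0 ≤ y 2}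

theorem isClosed_limC (M : ℝ) : IsClosed (limC M) := by
  have h1 : IsClosed {y : Fin 6 → ℝ | 0 ≤ zfun (y 4) (y 5) (y 0) (y 1) (y 2)} := by
    unfold zfun
    exact isClosed_le (by fun_prop) (by fun_prop)
  have h2 : IsClosed {y : Fin 6 → ℝ | 0 ≤ y 2} := isClosed_le (by fun_prop) (by fun_prop)
  exact (isClosed_regC M).inter (h1.inter h2)

namespace CutFlow

variable {M : ℝ} {φ : (Fin 6 → ℝ) → ℝ → Fin 6 → ℝ} {y : Fin 6 → ℝ}

theorem mem_limC (h : CutFlow M φ) (hy : ShootStart M y) (hC : ∀ t, 0 ≤ t → φ y t ∈ regC M) :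
    ∀ t, 0 ≤ t → φ y t ∈ limC M := by
  intro t ht
  have ho := h.orbit_Ici hy.adm hy.start.x0 hy.start.ω0 fun t ht ↦ (hC t ht).1
  have hz := (ho.mono (Orbit.Icc_sub le_rfl)).z_nonneg (q := t)
    (fun r hr ↦ h.j_nonneg (hC r hr.1)) (h.orbit_start hy).z.ge t ⟨ht, le_rfl⟩
  obtain ⟨h3, h4, h5⟩ := h.param (y := y) t
  refine ⟨hC t ht, ?_, (ho.w0 t ht).le⟩
  rwa [h4, h5]

/-- Before `k` changes sign, `X` passes through `1/2`, and it takes long to get there from a small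
starting value. -/
theorem exists_half (h : CutFlow M φ) (hy : ShootStart M y) (hC : ∀ t, 0 ≤ t → φ y t ∈ regC M)
    (hk : ∃ t, 0 ≤ t ∧ φ y t 1 < 0) :
    ∃ T, 0 ≤ T ∧ φ y T 0 = 1 / 2 ∧ 0 ≤ φ y T 1 ∧ 1 / 2 ≤ y 0 * Real.exp (2 * T) := by
  obtain ⟨t₁, ht₁, hk₁⟩ := hk
  have ho := h.orbit_Ici hy.adm hy.start.x0 hy.start.ω0 fun t ht ↦ (hC t ht).1
  have anti : ∀ p q, 0 ≤ p → p ≤ q → φ y q 1 ≤ φ y p 1 := fun p q hp hpq ↦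
    (ho.mono (Orbit.Icc_sub hp)).k_anti (fun r hr ↦ h.j_nonneg (hC r (hp.trans hr.1))) hpq
  have hk0 : φ y 0 1 = y 1 := by rw [h.zero]
  obtain ⟨τ, hτ, hkτ⟩ : ∃ τ ∈ Icc 0 t₁, φ y τ 1 = 0 :=
    intermediate_value_Icc' ht₁ (h.cont_coord y 1).continuousOn
      ⟨hk₁.le, by rw [hk0]; exact hy.start.κ0.le⟩
  -- at the zero of `k`, the conditions `j ≥ 0` and `Z ≥ 0` force `X ≥ 1`
  have hXτ : 1 ≤ φ y τ 0 := by
    have hz := (h.mem_limC hy hC τ hτ.1).2.1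
    have hj := h.j_nonneg (hC τ hτ.1)
    obtain ⟨h3, h4, h5⟩ := h.param (y := y) τ
    simp only [zfun, jfun, hkτ, h4, h5] at hz hj
    have h6 : 0 ≤ y 5 / 2 * φ y τ 0 - φ y τ 2 :=
      nonneg_of_mul_nonneg_right (by linarith : 0 ≤ y 4 * (y 5 / 2 * φ y τ 0 - φ y τ 2)) hy.adm.a0
    have h7 := mul_nonneg ho.c_nonneg (ho.X0 τ hτ.1).le
    linarith
  obtain ⟨T, hT, hXT⟩ : ∃ T ∈ Icc 0 τ, φ y T 0 = 1 / 2 :=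
    intermediate_value_Icc hτ.1 (h.cont_coord y 0).continuousOn
      ⟨by rw [h.zero]; linarith [hy.start.x1], by linarith⟩
  refine ⟨T, hT.1, hXT, hkτ ▸ anti T τ hT.1 hT.2, ?_⟩
  have hgrow := mul_exp_le (f := fun t ↦ -φ y t 0) (-2) (p := 0) (q := T)
    (fun t ht ↦ (ho.dX t ht.1).neg) (fun t ht ↦ by
      have h1 := anti 0 t le_rfl ht.1
      have h2 := hy.start.κ_le hy.adm.l0
      have h3 := ho.X0 t ht.1
      rw [hk0] at h1
      nlinarith) hT.1
  rw [mul_zero, Real.exp_zero, mul_one, hXT, h.zero] at hgrow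
  have h2 := mul_le_mul_of_nonneg_right hgrow (Real.exp_pos (2 * T)).le
  rw [mul_assoc, ← Real.exp_add, neg_mul 2 T, neg_add_cancel, Real.exp_zero] at h2
  linarith

/-- A sequence of shooting orbits that pass through `X = 1/2` at times tending to infinity, and at
points that converge, yields a homoclinic trajectory. -/
theorem homoclinic_of_limit (h : CutFlow M φ) {y : ℕ → Fin 6 → ℝ} {T : ℕ → ℝ} {z : Fin 6 → ℝ}
    (hy : ∀ n, ShootStart M (y n)) (hC : ∀ n t, 0 ≤ t → φ (y n) t ∈ regC M)
    (hk : ∀ n, ∃ t, 0 ≤ t ∧ φ (y n) t 1 < 0) (hT : Tendsto T atTop atTop)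
    (hX : ∀ n, φ (y n) (T n) 0 = 1 / 2) (hkT : ∀ n, 0 ≤ φ (y n) (T n) 1)
    (hz : Tendsto (fun n ↦ φ (y n) (T n)) atTop (nhds z)) (hadm : Adm (z 3) (z 4) (z 5)) :
    z 3 ≠ 0 ∧ ∃ x ϑ u : ℝ → ℝ, IsHomoclinicToOrigin (z 3) (z 4) (z 5) x ϑ u := by
  have hzi := tendsto_pi_nhds.1 hz
  have hlim : ∀ t, φ z t ∈ limC M := by
    intro t
    have h1 : Tendsto (fun n ↦ φ (y n) (T n + t)) atTop (nhds (φ z t)) := by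
      simp only [h.add]
      exact (h.cont.tendsto (z, t)).comp (hz.prodMk_nhds tendsto_const_nhds)
    refine (isClosed_limC M).mem_of_tendsto h1 ?_
    filter_upwards [hT.eventually_ge_atTop (-t)] with n hn
    exact h.mem_limC (hy n) (hC n) _ (by linarith)
  have hz0 : z 0 = 1 / 2 :=
    tendsto_nhds_unique (hzi 0) (tendsto_const_nhds.congr fun n ↦ (hX n).symm)
  have hz1 : 0 ≤ z 1 := ge_of_tendsto' (hzi 1) hkT
  have hbox : ∀ t, ‖φ z t‖ ≤ M := fun t ↦ (hlim t).1.1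
  have hj : ∀ t, 0 ≤ jfun (z 3) (z 5) (φ z t 0) (φ z t 1) (φ z t 2) :=
    fun t ↦ h.j_nonneg (hlim t).1
  have hZ : ∀ t, 0 ≤ zfun (z 4) (z 5) (φ z t 0) (φ z t 1) (φ z t 2) := by
    intro t
    obtain ⟨h3, h4, h5⟩ := h.param (y := z) t
    have := (hlim t).2.1
    rwa [h4, h5] at this
  have a0 := hadm.a0
  have b0 := hadm.b0
  have hXpos : ∀ t, 0 < φ z t 0 := by
    have h0 : 0 < φ z 0 0 := by rw [h.zero, hz0]; norm_num
    intro t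
    rcases le_total 0 t with ht | ht
    · exact (X_pos_of_deriv (h.cont_coord z 1) ht fun s _ ↦ h.dX (hbox s)).1 h0
    · exact (X_pos_of_deriv (h.cont_coord z 1) ht fun s _ ↦ h.dX (hbox s)).2 h0
  have hwpos : ∀ t, 0 < φ z t 2 := by
    intro t
    -- `w e^{at}` is strictly increasing and nonnegative
    have h1 := lt_of_deriv_pos (p := t - 1) (q := t)
      (fun s _ ↦ hasDerivAt_mul_exp (z 4) (h.dw (y := z) (hbox s)))
      (fun s _ ↦ by
        have h2 : 0 < z 4 * (z 5 / 2 * φ z s 0) := by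
          have := hXpos s
          positivity
        have h3 : z 4 * (z 5 / 2 * φ z s 0 - φ z s 2) + z 4 * φ z s 2 =
          z 4 * (z 5 / 2 * φ z s 0) := by ring
        rw [h3]
        positivity) (by linarith)
    have h2 : 0 ≤ φ z (t - 1) 2 * Real.exp (z 4 * (t - 1)) :=
      mul_nonneg (hlim _).2.2 (Real.exp_pos _).le
    exact pos_of_mul_pos_left (h2.trans_lt h1) (Real.exp_pos _).le
  have ho : Orbit (z 3) (z 4) (z 5) univ (fun t ↦ φ z t 0) (fun t ↦ φ z t 1) (fun t ↦ φ z t 2) :=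
    ⟨hadm.l0, a0, b0, hadm.b2, fun t _ ↦ h.dX (hbox t), fun t _ ↦ h.dk (hbox t),
      fun t _ ↦ h.dw (hbox t), fun t _ ↦ hXpos t, fun t _ ↦ hwpos t⟩
  have hk0 : 0 < φ z 0 1 := by
    have h0 : 0 ≤ φ z 0 1 := by rwa [h.zero]
    refine h0.lt_of_ne fun heq ↦ ?_
    have h1 := ho.w_le (hZ 0) h0
    have h2 := hj 0
    have h3 : φ z 0 0 = 1 / 2 := by rw [h.zero, hz0]
    simp only [h3] at h1
    simp only [jfun, ← heq, h3] at h2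
    linarith [hadm.b2]
  have hM : ∀ i t, |φ z t i| ≤ M := fun i t ↦ (norm_le_pi_norm (φ z t) i).trans (hbox t)
  -- for `b = 2` and `l² ≥ 8`, the approximating orbits could not cross `k = -l/2`
  have hc : 0 < 1 - z 5 / 2 ∨ z 3 ^ 2 < 8 := by
    by_contra! hcon
    have hb : z 5 = 2 := by linarith [hadm.b2]
    have hp : ∀ n, φ (y n) (T n) 3 = y n 3 ∧ φ (y n) (T n) 4 = y n 4 ∧ φ (y n) (T n) 5 = y n 5 :=
      fun n ↦ h.param (T n)
    have e1 : Tendsto (fun n ↦ y n 3 ^ 2) atTop (nhds (z 3 ^ 2)) :=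
      ((hzi 3).congr fun n ↦ (hp n).1).pow 2
    have e2 : Tendsto (fun n ↦ (1 - y n 5 / 2) * M) atTop (nhds ((1 - z 5 / 2) * M)) :=
      ((((hzi 5).congr fun n ↦ (hp n).2.2).div_const 2).const_sub 1).mul_const M
    obtain ⟨n, hn1, hn2⟩ := ((e1.eventually (lt_mem_nhds (show 15 / 2 < z 3 ^ 2 by linarith))).and
      (e2.eventually (gt_mem_nhds (show (1 - z 5 / 2) * M < 1 / 20 by simp [hb])))).exists
    have hon := h.orbit_Ici (hy n).adm (hy n).start.x0 (hy n).start.ω0 fun t ht ↦ (hC n t ht).1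
    obtain ⟨t₀, ht₀, hkt₀⟩ := hk n
    obtain ⟨t, ht, hkt⟩ := hon.exists_k_lt (fun t ht ↦ h.j_nonneg (hC n t ht)) ht₀ hkt₀
    have := (hon.mono (Orbit.Icc_sub le_rfl)).no_crossing (T := t) (h.orbit_start (hy n))
      (Or.inr ⟨hn1.le, fun r hr ↦ ?_⟩) t ⟨ht, le_rfl⟩
    · exact lt_asymm this hkt
    · refine le_trans ?_ hn2.le
      have := hon.c_nonneg
      gcongr
      exact (le_abs_self _).trans ((norm_le_pi_norm (φ (y n) r) 0).trans (hC n r hr.1).1)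
  have hoI := ho.mono (subset_univ (Ici 0))
  obtain ⟨t₀, ht₀, hkt₀⟩ := hoI.exists_k_neg (M := M) (fun t _ ↦ hj t) (hZ 0) hk0
    (fun t _ ↦ (le_abs_self _).trans (hM 0 t)) hc
  obtain ⟨hXt, hwt⟩ := hoI.tendsto_zero (fun t _ ↦ hj t) ht₀ hkt₀
  obtain ⟨hXb, hwb⟩ := ho.tendsto_atBot hj hZ hk0
  exact ⟨ho.l_ne_zero (hM 1) hZ hk0 hXt hwt hXb hwb, _, _, _,
    ho.isHomoclinic (hM 1) hXt hwt hXb hwb⟩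

end CutFlow

/-! ### The path of starting values -/

/-- The positive root of `κ² + l κ = 1`. -/
noncomputable def eigenSlope (l : ℝ) : ℝ := (√(l ^ 2 + 4) - l) / 2

theorem eigenSlope_pos (l : ℝ) : 0 < eigenSlope l := by
  have h : l < √(l ^ 2 + 4) := Real.lt_sqrt_of_sq_lt (by linarith)
  unfold eigenSlope
  linarith

theorem eigenSlope_eq (l : ℝ) : eigenSlope l ^ 2 + l * eigenSlope l = 1 := by
  have h := Real.sq_sqrt (show 0 ≤ l ^ 2 + 4 by positivity)
  unfold eigenSlope
  linear_combination h / 4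

/-- The starting point over the parameters `l, a, b` with `X = δ`. -/
noncomputable def startVec (δ l a b : ℝ) : Fin 6 → ℝ :=
  ![δ, eigenSlope l, a * b * δ / (2 * (a + 2 * eigenSlope l)), l, a, b]

theorem start_startVec {δ l a b : ℝ} (hδ : 0 < δ) (hδ1 : δ ≤ 1 / 10) (ha : 0 < a) (hb : 0 < b) :
    Start l a b δ (eigenSlope l) (a * b * δ / (2 * (a + 2 * eigenSlope l))) := by
  have h := eigenSlope_pos l
  refine ⟨hδ, hδ1, h, eigenSlope_eq l, by positivity, ?_⟩
  unfold zfun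
  field_simp
  ring

theorem continuousOn_startVec {δ : ℝ} {lam a b : ℝ → ℝ} {I : Set ℝ} (hl : ContinuousOn lam I)
    (ha : ContinuousOn a I) (hb : ContinuousOn b I) (ha0 : ∀ s ∈ I, 0 < a s) :
    ContinuousOn (fun s ↦ startVec δ (lam s) (a s) (b s)) I := by
  have hs : ContinuousOn (fun s ↦ eigenSlope (lam s)) I := by
    unfold eigenSlope
    fun_prop
  rw [continuousOn_pi]
  intro i
  fin_cases i
  · exact continuousOn_const
  · exact hs
  · refine ContinuousOn.div (by fun_prop) (by fun_prop) fun s hs' ↦ ?_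
    have h1 := ha0 s hs'
    have h2 := eigenSlope_pos (lam s)
    positivity
  · exact hl
  · exact ha
  · exact hb

/-- Corollary 1 of the paper: β(s) ∈ (0,2]. -/
theorem homoclinic_existence_beta_le_two
    (lam a b : ℝ → ℝ)
    (hlam_smooth : ContDiffOn ℝ (⊤ : ℕ∞) lam (Ico 0 1))
    (ha_smooth : ContDiffOn ℝ (⊤ : ℕ∞) a (Ico 0 1))
    (hb_smooth : ContDiffOn ℝ (⊤ : ℕ∞) b (Ico 0 1))
    (ha_pos : ∀ s ∈ Ico (0 : ℝ) 1, 0 < a s)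
    (hlam_nonneg : ∀ s ∈ Ico (0 : ℝ) 1, 0 ≤ lam s)
    (hlam0 : lam 0 = 0)
    (hlam_inf : Tendsto lam (nhdsWithin 1 (Iio 1)) atTop)
    (ha_bdd : IsBoundedUnder (· ≤ ·) (nhdsWithin 1 (Iio 1)) a)
    (hb_mem : ∀ s ∈ Ico (0 : ℝ) 1, b s ∈ Ioc (0 : ℝ) 2) :
    ∃ s₀ ∈ Ioo (0 : ℝ) 1, ∃ x ϑ u : ℝ → ℝ,
      IsHomoclinicToOrigin (lam s₀) (a s₀) (b s₀) x ϑ u := by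
  obtain ⟨S, ⟨hS0, hS1⟩, hS4⟩ : ∃ S, S ∈ Ioo (0 : ℝ) 1 ∧ 4 ≤ lam S := by
    have h1 : ∀ᶠ s in nhdsWithin (1 : ℝ) (Iio 1), s ∈ Ioo (0 : ℝ) 1 := Ioo_mem_nhdsLT one_pos
    exact (h1.and (hlam_inf.eventually_ge_atTop 4)).exists
  have hsub : Icc 0 S ⊆ Ico 0 1 := fun s hs ↦ ⟨hs.1, hs.2.trans_lt hS1⟩
  have cl : ContinuousOn lam (Icc 0 S) := hlam_smooth.continuousOn.mono hsub
  have ca : ContinuousOn a (Icc 0 S) := ha_smooth.continuousOn.mono hsub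
  have cb : ContinuousOn b (Icc 0 S) := hb_smooth.continuousOn.mono hsub
  have hadm : ∀ s ∈ Icc 0 S, Adm (lam s) (a s) (b s) := fun s hs ↦
    ⟨hlam_nonneg s (hsub hs), ha_pos s (hsub hs), (hb_mem s (hsub hs)).1, (hb_mem s (hsub hs)).2⟩
  have cbnd : ContinuousOn (fun s ↦ Orbit.bnd (lam s) (a s) (b s)) (Icc 0 S) := by
    unfold Orbit.bnd
    refine ContinuousOn.add (by fun_prop) (ContinuousOn.div (by fun_prop) (by fun_prop) ?_)
    exact fun s hs ↦ (mul_pos (hadm s hs).a0 (hadm s hs).b0).ne'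
  obtain ⟨C₁, hC₁⟩ := isCompact_Icc.exists_bound_of_continuousOn cbnd
  obtain ⟨C₂, hC₂⟩ := isCompact_Icc.exists_bound_of_continuousOn cl
  obtain ⟨C₃, hC₃⟩ := isCompact_Icc.exists_bound_of_continuousOn ca
  have h0S : (0 : ℝ) ∈ Icc 0 S := ⟨le_rfl, hS0.le⟩
  have c1 := (norm_nonneg _).trans (hC₁ 0 h0S)
  have c2 := (norm_nonneg _).trans (hC₂ 0 h0S)
  have c3 := (norm_nonneg _).trans (hC₃ 0 h0S)
  set M := C₁ + C₂ + C₃ + 4 with hMdef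
  obtain ⟨φ, h⟩ := exists_cutFlow (show 0 ≤ M by positivity)
  have h_start : ∀ δ, 0 < δ → δ ≤ 1 / 10 → ∀ s ∈ Icc 0 S,
      ShootStart M (startVec δ (lam s) (a s) (b s)) := by
    intro δ h0 h1 s hs
    have e1 := (le_abs_self _).trans (hC₁ s hs)
    have e2 := (le_abs_self _).trans (hC₂ s hs)
    have e3 := (le_abs_self _).trans (hC₃ s hs)
    refine ⟨hadm s hs, start_startVec h0 h1 (hadm s hs).a0 (hadm s hs).b0, ?_, ?_, ?_, ?_⟩
    · change Orbit.bnd (lam s) (a s) (b s) < M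
      linarith
    · change lam s + 3 < M
      linarith
    · change a s < M
      linarith
    · change b s < M
      linarith [(hadm s hs).b2]
  -- shoot from the starting values `X = 1 / (10 (n + 1))`
  set δ : ℕ → ℝ := fun n ↦ 1 / 10 * (1 / ((n : ℝ) + 1)) with hδ
  have hδ0 : ∀ n, 0 < δ n := fun n ↦ by simp only [hδ]; positivity
  have hδ1 : ∀ n, δ n ≤ 1 / 10 := by
    intro n
    have h1 : 1 / ((n : ℝ) + 1) ≤ 1 := by
      rw [div_le_one (by positivity)]
      linarith [n.cast_nonneg (α := ℝ)]
    simp only [hδ]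
    linarith
  have hδt : Tendsto δ atTop (nhds 0) := by
    have h1 := (tendsto_one_div_add_atTop_nhds_zero_nat (𝕜 := ℝ)).const_mul (1 / 10)
    rwa [mul_zero] at h1
  have hshoot := fun n ↦ h.shooting hS0.le
    (continuousOn_startVec (δ := δ n) cl ca cb fun s hs ↦ (hadm s hs).a0)
    (h_start (δ n) (hδ0 n) (hδ1 n)) hlam0 (show 13 ≤ lam S ^ 2 by nlinarith)
  choose s hs hreg hneg using hshoot
  set y : ℕ → Fin 6 → ℝ := fun n ↦ startVec (δ n) (lam (s n)) (a (s n)) (b (s n)) with hy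
  have hyi : ∀ n, ShootStart M (y n) := fun n ↦ h_start _ (hδ0 n) (hδ1 n) _ (hs n)
  have hC : ∀ n t, 0 ≤ t → φ (y n) t ∈ regC M := fun n t ht ↦ (hreg n t ht).1
  choose T hT0 hTX hTk hTexp using fun n ↦ h.exists_half (hyi n) (hC n) (hneg n)
  have hTt : Tendsto T atTop atTop := by
    rw [tendsto_atTop]
    intro R
    have h1 : Tendsto (fun n ↦ δ n * Real.exp (2 * R)) atTop (nhds 0) := by
      simpa using hδt.mul_const (Real.exp (2 * R))
    filter_upwards [h1.eventually (gt_mem_nhds (show (0 : ℝ) < 1 / 2 by norm_num))] with n hn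
    by_contra! hlt
    have h2 : 1 / 2 ≤ δ n * Real.exp (2 * T n) := hTexp n
    have h3 : δ n * Real.exp (2 * T n) ≤ δ n * Real.exp (2 * R) := by
      have := hδ0 n
      gcongr
    linarith
  obtain ⟨⟨s₀, z⟩, ⟨hs₀, -⟩, σ, hσ, hlim⟩ :=
    ((isCompact_Icc (a := (0 : ℝ)) (b := S)).prod
      (isCompact_closedBall (0 : Fin 6 → ℝ) M)).tendsto_subseq
      (x := fun n ↦ (s n, φ (y n) (T n)))
      fun n ↦ ⟨hs n, by simpa using (hC n _ (hT0 n)).1⟩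
  have hls : Tendsto (fun n ↦ s (σ n)) atTop (nhds s₀) := (continuous_fst.tendsto _).comp hlim
  have hlz : Tendsto (fun n ↦ φ (y (σ n)) (T (σ n))) atTop (nhds z) :=
    (continuous_snd.tendsto _).comp hlim
  have hlsw : Tendsto (fun n ↦ s (σ n)) atTop (nhdsWithin s₀ (Icc 0 S)) :=
    tendsto_nhdsWithin_iff.2 ⟨hls, Eventually.of_forall fun n ↦ hs _⟩
  have hp := fun n ↦ h.param (y := y (σ n)) (T (σ n))
  have hlzi := tendsto_pi_nhds.1 hlz
  have z3 : z 3 = lam s₀ := tendsto_nhds_unique (hlzi 3)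
    (((cl s₀ hs₀).tendsto.comp hlsw).congr fun n ↦ (hp n).1.symm)
  have z4 : z 4 = a s₀ := tendsto_nhds_unique (hlzi 4)
    (((ca s₀ hs₀).tendsto.comp hlsw).congr fun n ↦ (hp n).2.1.symm)
  have z5 : z 5 = b s₀ := tendsto_nhds_unique (hlzi 5)
    (((cb s₀ hs₀).tendsto.comp hlsw).congr fun n ↦ (hp n).2.2.symm)
  obtain ⟨hne, hhom⟩ := h.homoclinic_of_limit (fun n ↦ hyi (σ n)) (fun n ↦ hC (σ n))
    (fun n ↦ hneg (σ n)) (hTt.comp hσ.tendsto_atTop) (fun n ↦ hTX (σ n)) (fun n ↦ hTk (σ n)) hlz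
    (by rw [z3, z4, z5]; exact hadm s₀ hs₀)
  rw [z3, z4, z5] at hhom
  refine ⟨s₀, ⟨hs₀.1.lt_of_ne ?_, hs₀.2.trans_lt hS1⟩, hhom⟩
  rintro rfl
  exact hne (z3.trans hlam0)
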